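/- arXiv:1307.6206 — 3 statements merged into one kernel-verified Lean document; each statement's English description precedes it below -/
import Mathlib

section
/- Let (R,m,k) be a one-dimensional Noetherian reduced local ring with finitely generated integral closure S, and x a minimal reduction of m. Then e(R) = dim_k(S/mS), where e(R) is the Hilbert-Samuel multiplicity of R. -/
open IsLocalRing

/-- The length of a module, expressed as the Krull dimension of its lattice of submodules. -/
noncomputable def moduleLength (R M : Type*) [Ring R] [AddCommGroup M] [Module R M] :
    WithBot ℕ∞ :=
  Order.krullDim (Submodule R M)

open scoped nonZeroDivisors

/-!
Since `m ^ (n + 1) = x m ^ n` and `R` is reduced, `x` and `m` have the same annihilator, which is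
zero because `R` is not a field; so `x` is a nonzerodivisor. For `y ∈ m` the fraction `y / x` maps
the finitely generated faithful module `m ^ n` into itself, hence is integral over `R` and lies in
`S`: this gives `xS = mS`. Finally `S / R` is finitely generated and torsion, so it has finite
length, and computing the length of `S / xR` through `R` and through `xS` gives
`λ(R / xR) + λ(S / R) = λ(S / xS) + λ(xS / xR)`, where `xS / xR ≅ S / R`. Cancelling `λ(S / R)`
leaves `e(R) = λ(S / mS)`, which is the dimension over `R / m`.
-/

section Ring

variable {R N M : Type*} [Ring R] [AddCommGroup N] [Module R N] [AddCommGroup M] [Module R M]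

theorem length_quotient_map_of_injective {f : N →ₗ[R] M} (hf : Function.Injective f)
    (K : Submodule R N) :
    Module.length R (M ⧸ K.map f) =
      Module.length R (N ⧸ K) + Module.length R (M ⧸ LinearMap.range f) := by
  have hK : K ≤ (K.map f).comap f := Submodule.le_comap_map f K
  have hrange : K.map f ≤ LinearMap.range f := LinearMap.map_le_range
  refine Module.length_eq_add_of_exact (K.mapQ (K.map f) f hK) (Submodule.factor hrange) ?_
    (Submodule.factor_surjective hrange) (LinearMap.exact_iff.mpr ?_)
  · rw [← LinearMap.ker_eq_bot, Submodule.ker_mapQ, Submodule.comap_map_eq_of_injective hf,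
      Submodule.mkQ_map_self]
  · rw [Submodule.factor, Submodule.ker_mapQ, Submodule.range_mapQ, Submodule.comap_id]

-- Adding the length of `M ⧸ g N` to either side gives the length of `M ⧸ g (h N) = M ⧸ f (g N)`.
theorem length_quotient_range_eq_of_comp_eq {g : N →ₗ[R] M} {f : M →ₗ[R] M} {h : N →ₗ[R] N}
    (hg : Function.Injective g) (hf : Function.Injective f) (hcomp : g ∘ₗ h = f ∘ₗ g)
    (hfin : IsFiniteLength R (M ⧸ LinearMap.range g)) :
    Module.length R (N ⧸ LinearMap.range h) = Module.length R (M ⧸ LinearMap.range f) := by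
  have hmap : (LinearMap.range h).map g = (LinearMap.range g).map f := by
    rw [← LinearMap.range_comp, hcomp, LinearMap.range_comp]
  have key : Module.length R (N ⧸ LinearMap.range h) + Module.length R (M ⧸ LinearMap.range g) =
      Module.length R (M ⧸ LinearMap.range f) + Module.length R (M ⧸ LinearMap.range g) := by
    rw [← length_quotient_map_of_injective hg, hmap, length_quotient_map_of_injective hf, add_comm]
  exact WithTop.add_right_cancel (Module.length_ne_top_iff.mpr hfin) key

end Ring

theorem length_eq_finrank_quotient {R M : Type*} [CommRing R] [AddCommGroup M] [Module R M]
    (m : Ideal R) [m.IsMaximal] [Module (R ⧸ m) M] [IsScalarTower R (R ⧸ m) M]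
    [Module.Finite R M] : Module.length R M = Module.finrank (R ⧸ m) M := by
  let := Ideal.Quotient.field m
  have : Module.Finite (R ⧸ m) M := Module.Finite.of_restrictScalars_finite R _ _
  rw [Module.length_eq_of_surjective (R := R ⧸ m) Ideal.Quotient.mk_surjective,
    Module.length_eq_finrank]

theorem isFiniteLength_of_isTorsion {R M : Type*} [CommRing R] [IsNoetherianRing R]
    [Ring.KrullDimLE 1 R] [AddCommGroup M] [Module R M] [Module.Finite R M]
    (hM : Module.IsTorsion R M) : IsFiniteLength R M := by
  obtain ⟨c, hcM, hc⟩ := Submodule.annihilator_top_inter_nonZeroDivisors hM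
  have hcM' : Module.IsTorsionBySet R M (Ideal.span {c} : Ideal R) :=
    (Module.isTorsionBySet_span_singleton_iff c).mpr fun {a} =>
      Submodule.mem_annihilator.mp hcM a Submodule.mem_top
  let := hcM'.module
  have : IsScalarTower R (R ⧸ Ideal.span {c}) M := hcM'.isScalarTower
  have : Module.Finite (R ⧸ Ideal.span {c}) M := Module.Finite.of_restrictScalars_finite R _ _
  have : IsArtinian R (R ⧸ Ideal.span {c}) :=
    (isFiniteLength_iff_isNoetherian_isArtinian.mp
      (isFiniteLength_quotient_span_singleton R hc)).2
  have : IsArtinianRing (R ⧸ Ideal.span {c}) := isArtinian_of_tower R this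
  exact isFiniteLength_iff_isNoetherian_isArtinian.mpr
    ⟨inferInstance, isArtinian_of_surjective_algebraMap (R := R ⧸ Ideal.span {c})
      Ideal.Quotient.mk_surjective⟩

theorem isTorsion_quotient_range_algebraMap {R S K : Type*} [CommRing R] [CommRing S]
    [CommRing K] [Algebra R S] [Algebra R K] [Algebra S K] [IsScalarTower R S K]
    [IsFractionRing R K] (hSK : Function.Injective (algebraMap S K)) :
    Module.IsTorsion R (S ⧸ LinearMap.range (Algebra.linearMap R S)) := by
  intro q
  obtain ⟨s, rfl⟩ := Submodule.mkQ_surjective _ q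
  obtain ⟨c, r, hr⟩ := IsLocalization.exists_integer_multiple R⁰ (algebraMap S K s)
  have hcs : algebraMap R S r = (c : R) • s := hSK <| by
    rw [← IsScalarTower.algebraMap_apply, hr]
    exact (map_smul (IsScalarTower.toAlgHom R S K) (c : R) s).symm
  exact ⟨c, (Submodule.Quotient.mk_eq_zero _).mpr ⟨r, hcs⟩⟩

theorem isIntegral_of_smul_mem_of_faithful {R A M : Type*} [CommRing R] [CommRing A] [Algebra R A]
    [AddCommGroup M] [Module R M] [Module A M] [IsScalarTower R A M] {N : Submodule R M}
    (hN : N.FG) (hfaithful : ∀ a : A, (∀ m ∈ N, a • m = 0) → a = 0) {t : A}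
    (ht : ∀ m ∈ N, t • m ∈ N) : IsIntegral R t := by
  have : Module.Finite R N := Module.Finite.iff_fg.mpr hN
  let f : Module.End R N := (Algebra.lsmul R R M t).restrict ht
  have hf (m : N) : (f m : M) = t • (m : M) := rfl
  have haeval (p : Polynomial R) (m : N) :
      (Polynomial.aeval f p m : M) = Polynomial.aeval t p • (m : M) := by
    induction p using Polynomial.induction_on generalizing m with
    | C r => simp
    | add p q hp hq => simp [add_smul, hp, hq]
    | monomial n r ih =>
      rw [pow_succ, ← mul_assoc, map_mul, map_mul _ (_ * _), mul_smul, Module.End.mul_apply, ih]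
      simp [hf, mul_smul]
  obtain ⟨p, hp, hpf⟩ := LinearMap.exists_monic_and_aeval_eq_zero R f
  refine ⟨p, hp, hfaithful _ fun m hm => ?_⟩
  rw [← Polynomial.aeval_def, ← haeval p ⟨m, hm⟩, hpf, LinearMap.zero_apply, Submodule.coe_zero]

/-- The ideal `J` is a reduction of the ideal `I`, expressed by the stabilisation of powers rather
than by equality of integral closures. -/
def IsReduction {R : Type*} [CommRing R] (J I : Ideal R) : Prop :=
  J ≤ I ∧ ∃ n : ℕ, I ^ (n + 1) = J * I ^ n

namespace IsReduction

variable {R : Type*} [CommRing R] {I J : Ideal R} {x : R}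

theorem annihilator_eq [IsReduced R] (h : IsReduction J I) : J.annihilator = I.annihilator := by
  obtain ⟨hJI, n, hn⟩ := h
  refine le_antisymm (fun y hy => ?_) (Submodule.annihilator_mono hJI)
  have hyI : ∀ b ∈ I ^ (n + 1), y * b = 0 := by
    intro b hb
    rw [hn] at hb
    exact Submodule.mem_annihilator.mp hy b (Ideal.mul_le_left hb)
  refine Submodule.mem_annihilator.mpr fun a ha => ?_
  refine eq_zero_of_pow_eq_zero (n := n + 1) ?_
  rw [smul_eq_mul, mul_pow, pow_succ, mul_assoc, hyI _ (Ideal.pow_mem_pow ha _), mul_zero]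

theorem isIntegral_of_algebraMap_mul_eq {A : Type*} [CommRing A] [Algebra R A]
    (h : IsReduction (Ideal.span {x}) I) (hI : I.FG) (hx : IsUnit (algebraMap R A x)) {y : R}
    (hy : y ∈ I) {t : A} (ht : algebraMap R A x * t = algebraMap R A y) : IsIntegral R t := by
  obtain ⟨hxI, n, hn⟩ := h
  rw [Ideal.span_singleton_le_iff_mem] at hxI
  refine isIntegral_of_smul_mem_of_faithful (M := A)
    (N := Submodule.map (Algebra.linearMap R A) (I ^ n)) (Submodule.FG.map _ hI.pow)
    (fun a ha => ?_) ?_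
  · have hxn : a • algebraMap R A (x ^ n) = 0 := ha _ ⟨x ^ n, Ideal.pow_mem_pow hxI n, rfl⟩
    rwa [smul_eq_mul, map_pow, (hx.pow n).mul_left_eq_zero] at hxn
  · rintro _ ⟨a, ha, rfl⟩
    have hya : y * a ∈ Ideal.span {x} * I ^ n := by
      rw [← hn, pow_succ']
      exact Ideal.mul_mem_mul hy ha
    obtain ⟨b, hb, hxb⟩ := Ideal.mem_span_singleton_mul.mp hya
    refine ⟨b, hb, hx.mul_left_cancel ?_⟩
    rw [Algebra.linearMap_apply, Algebra.linearMap_apply, smul_eq_mul, ← mul_assoc, ht, ← map_mul,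
      ← map_mul, hxb]

section IntegralClosure

variable (S K : Type*) [CommRing S] [CommRing K] [Algebra R S] [Algebra R K] [Algebra S K]
  [IsScalarTower R S K] [IsIntegralClosure S R K]

theorem span_singleton_smul_top_eq (h : IsReduction (Ideal.span {x}) I) (hI : I.FG)
    (hx : IsUnit (algebraMap R K x)) :
    Ideal.span {x} • (⊤ : Submodule R S) = I • (⊤ : Submodule R S) := by
  refine le_antisymm (Submodule.smul_mono_left h.1) (Submodule.smul_le.mpr fun y hy s _ => ?_)
  obtain ⟨t, ht⟩ : ∃ t, algebraMap R K x * t = algebraMap R K y := hx.dvd.imp fun _ => Eq.symm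
  obtain ⟨t, rfl⟩ :=
    (IsIntegralClosure.isIntegral_iff (A := S)).mp (h.isIntegral_of_algebraMap_mul_eq hI hx hy ht)
  have hxt : x • t = algebraMap R S y := by
    apply IsIntegralClosure.algebraMap_injective S R K
    rw [Algebra.smul_def, map_mul, ← IsScalarTower.algebraMap_apply, ht,
      ← IsScalarTower.algebraMap_apply]
  rw [← algebraMap_smul S y s, ← hxt, smul_assoc]
  exact Submodule.smul_mem_smul (Ideal.mem_span_singleton_self x) Submodule.mem_top

theorem length_quotient_span_singleton_eq [IsFractionRing R K] [IsNoetherianRing R]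
    [Ring.KrullDimLE 1 R] [Module.Finite R S] (h : IsReduction (Ideal.span {x}) I) (hx : x ∈ R⁰) :
    Module.length R (R ⧸ Ideal.span {x}) =
      Module.length R (S ⧸ I • (⊤ : Submodule R S)) := by
  have hxK : IsUnit (algebraMap R K x) := IsLocalization.map_units K (⟨x, hx⟩ : R⁰)
  have hSK : Function.Injective (algebraMap S K) := IsIntegralClosure.algebraMap_injective S R K
  have hRS : Function.Injective (Algebra.linearMap R S) := by
    have hRK := IsFractionRing.injective R K
    rw [IsScalarTower.algebraMap_eq R S K, RingHom.coe_comp] at hRK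
    exact hRK.of_comp
  have hxS : IsSMulRegular S x :=
    .of_injective (IsScalarTower.toAlgHom R S K) hSK
      ((isSMulRegular_algebraMap_iff K).mp (hxK.isSMulRegular K))
  have hcomp : Algebra.linearMap R S ∘ₗ LinearMap.toSpanSingleton R R x =
      DistribSMul.toLinearMap R S x ∘ₗ Algebra.linearMap R S := by
    ext
    simp [Algebra.smul_def]
  have hfin : IsFiniteLength R (S ⧸ LinearMap.range (Algebra.linearMap R S)) :=
    isFiniteLength_of_isTorsion (isTorsion_quotient_range_algebraMap hSK)
  have hrangeR : LinearMap.range (LinearMap.toSpanSingleton R R x) = Ideal.span {x} :=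
    LinearMap.range_toSpanSingleton x
  have hrangeS : LinearMap.range (DistribSMul.toLinearMap R S x) = I • (⊤ : Submodule R S) := by
    rw [← h.span_singleton_smul_top_eq S K (IsNoetherian.noetherian I) hxK,
      Submodule.ideal_span_singleton_smul, LinearMap.range_eq_map]
    rfl
  rw [← hrangeR, ← hrangeS]
  exact length_quotient_range_eq_of_comp_eq hRS hxS hcomp hfin

end IntegralClosure

end IsReduction

section LocalRing

variable {R : Type*} [CommRing R] [IsLocalRing R] [IsReduced R]

theorem annihilator_maximalIdeal_eq_bot (hR : ¬ IsField R) : (maximalIdeal R).annihilator = ⊥ := by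
  refine (Submodule.eq_bot_iff _).mpr fun y hy => ?_
  rw [Submodule.mem_annihilator] at hy
  by_cases hym : y ∈ maximalIdeal R
  · exact pow_eq_zero_iff two_ne_zero |>.mp ((sq y).trans (hy y hym))
  · have hyu : IsUnit y := notMem_maximalIdeal.mp hym
    refine absurd (isField_iff_maximalIdeal_eq.mpr ((Submodule.eq_bot_iff _).mpr fun a ha => ?_)) hR
    exact hyu.mul_right_eq_zero.mp (hy a ha)

theorem IsReduction.mem_nonZeroDivisors {x : R} (hR : ¬ IsField R)
    (h : IsReduction (Ideal.span {x}) (maximalIdeal R)) : x ∈ R⁰ := by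
  refine mem_nonZeroDivisors_iff_right.mpr fun y hyx => ?_
  have hy : y ∈ (Ideal.span {x}).annihilator :=
    (Submodule.mem_annihilator_span_singleton x y).mpr hyx
  rwa [h.annihilator_eq, annihilator_maximalIdeal_eq_bot hR] at hy

end LocalRing

/-- Let `(R, m, k)` be a one-dimensional Noetherian reduced local ring with
finitely generated integral closure `S` (in the total ring of fractions), and `x` a minimal
reduction of `m`.  Then `e(R) = dim_k (S/mS)`, where the Hilbert–Samuel multiplicity `e(R)` is
computed as `λ_R(R/xR)` (valid since `x` is a minimal reduction of `m` in a one-dimensional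
Cohen-Macaulay local ring). -/
theorem stmt4 (R S : Type*) [CommRing R] [IsLocalRing R] [IsNoetherianRing R] [IsReduced R]
    (hdim : ringKrullDim R = 1)
    [CommRing S] [Algebra R S] [Algebra S (FractionRing R)]
    [IsScalarTower R S (FractionRing R)]
    [IsIntegralClosure S R (FractionRing R)]
    [Module.Finite R S]
    (x : R) (hx : x ∈ maximalIdeal R)
    (hred : ∃ n : ℕ, maximalIdeal R ^ (n + 1) = Ideal.span {x} * maximalIdeal R ^ n)
    (e : ℕ) (he : (e : WithBot ℕ∞) = moduleLength R (R ⧸ Ideal.span {x})) :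
    e = Module.finrank (R ⧸ maximalIdeal R)
      (S ⧸ (maximalIdeal R • (⊤ : Submodule R S))) := by
  have hR : ¬ IsField R := fun hfield =>
    zero_ne_one ((ringKrullDim_eq_zero_of_isField hfield).symm.trans hdim)
  have : Ring.KrullDimLE 1 R := Ring.krullDimLE_iff.mpr hdim.le
  have hxm : IsReduction (Ideal.span {x}) (maximalIdeal R) :=
    ⟨(Ideal.span_singleton_le_iff_mem _).mpr hx, hred⟩
  have hlength : (e : ℕ∞) = Module.length R (R ⧸ Ideal.span {x}) :=
    WithBot.coe_injective (he.trans (Module.coe_length R _).symm)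
  rw [hxm.length_quotient_span_singleton_eq S (FractionRing R) (hxm.mem_nonZeroDivisors hR),
    length_eq_finrank_quotient (maximalIdeal R)] at hlength
  exact_mod_cast hlength
end

section
/- Let (R,m,k) be a one-dimensional Cohen-Macaulay standard graded ring over an uncountable field k whose h-vector is (1,n) with n ≥ 3 (equivalently, R has minimal multiplicity and embedding dimension n+1 ≥ 4). Then there exist uncountably many pairwise non-isomorphic (as graded modules, even up to shift) graded ideals of the form I_α = (x, u + αv), α ∈ k, where x is a homogeneous minimal reduction of m and x,u,v are part of a basis of m/m². In particular R is not of graded countable Cohen-Macaulay type. -/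
/-- A (ℤ-)graded module over a graded `k`-algebra `R` with grading `𝒜`. -/
structure GrMod (k R : Type) [Field k] [CommRing R] [Algebra k R]
    (𝒜 : ℕ → Submodule k R) where
  M : Type
  [acg : AddCommGroup M]
  [mod : Module R M]
  gr : ℤ → AddSubgroup M
  internal : DirectSum.IsInternal gr
  smul_mem : ∀ (i : ℕ) (j : ℤ) (r : R) (y : M), r ∈ 𝒜 i → y ∈ gr j → r • y ∈ gr (i + j)

attribute [instance] GrMod.acg GrMod.mod

variable (k R : Type) [Field k] [CommRing R] [Algebra k R] (𝒜 : ℕ → Submodule k R)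

/-- Two graded modules are isomorphic up to a shift in degree. -/
def GrIsoUpToShift (N N' : GrMod k R 𝒜) : Prop :=
  ∃ (e : N.M ≃ₗ[R] N'.M) (s : ℤ), ∀ (j : ℤ) (y : N.M), y ∈ N.gr j → e y ∈ N'.gr (j + s)

/-- Two (graded) ideals of `R` are isomorphic as graded modules up to shift. -/
def GrIdealIsoUpToShift (I J : Ideal R) : Prop :=
  ∃ (e : I ≃ₗ[R] J) (s : ℤ), ∀ (d : ℕ) (y : I), (y : R) ∈ 𝒜 d →
    ∃ d' : ℕ, (d' : ℤ) = (d : ℤ) + s ∧ ((e y : R) ∈ 𝒜 d')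

/-- The irrelevant maximal ideal of a (standard) graded ring: generated by elements of
positive degree. -/
def gradedIrrelevant : Ideal R :=
  Ideal.span {r : R | ∃ i : ℕ, 0 < i ∧ r ∈ 𝒜 i}

/-- A maximal Cohen-Macaulay module over a one-dimensional Cohen-Macaulay graded ring with
irrelevant maximal ideal `m`: finitely generated, nonzero, with a nonzerodivisor in `m`
acting regularly (i.e. of depth one). -/
def GrMod.IsMCM (m : Ideal R) (N : GrMod k R 𝒜) : Prop :=
  Module.Finite R N.M ∧ Nontrivial N.M ∧ ∃ r ∈ m, ∀ y : N.M, r • y = 0 → y = 0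

/-- A graded module is indecomposable. -/
def GrMod.Indec (N : GrMod k R 𝒜) : Prop :=
  Nontrivial N.M ∧ ∀ p q : Submodule R N.M, IsCompl p q → p = ⊥ ∨ q = ⊥

/-- `R` has graded countable Cohen-Macaulay type: there are only countably many
indecomposable graded maximal Cohen-Macaulay modules up to isomorphism and shift. -/
def HasGradedCountableCMType (m : Ideal R) : Prop :=
  ∃ F : ℕ → GrMod k R 𝒜, ∀ N : GrMod k R 𝒜,
    GrMod.IsMCM k R 𝒜 m N → GrMod.Indec k R 𝒜 N → ∃ i : ℕ, GrIsoUpToShift k R 𝒜 N (F i)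

/-
Multiplication by `x⁻¹` carries the linear forms of `R` onto a `k`-subspace `A` of the total ring of
fractions, and `m² = x m` says precisely that `A` is a ring. An ideal `(x, w)` with `w` linear
corresponds to the plane `⟨1, w / x⟩` of `A`; graded isomorphisms of such ideals are multiplications
by units of `A`, and direct sum decompositions come from idempotents of `A` lying in the plane.

It remains to study planes `⟨1, u + α v⟩` in an algebra `A` of dimension at least four. There are
only finitely many idempotents, and each one other than `0` and `1` lies in at most one plane. If
`u²` is not in `⟨1, u, v⟩`, then no three planes are translates of each other by units: two distinct
translates have `(u + α v) (u + β v) ∈ ⟨1, u, v⟩`, and three such products determine `u²`. Such `u`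
and `v` exist unless `a² ∈ ⟨1, a⟩` for all `a`; but then every plane is a subalgebra, and a
subalgebra is the only one of its own translates that contains `1`.
-/

theorem exists_subset_pairwise_not_rel_of_countable_classes {X : Type*} (r : Setoid X) {S : Set X}
    (hS : ¬ S.Countable) (hr : ∀ x, {y | r y x}.Countable) :
    ∃ T ⊆ S, ¬ T.Countable ∧ T.Pairwise fun x y => ¬ r x y := by
  obtain ⟨T, hTS, hT⟩ := Set.exists_subset_bijOn S (Quotient.mk r)
  refine ⟨T, hTS, fun hTc => hS ?_, fun x hx y hy hne h => hne (hT.injOn hx hy (Quotient.sound h))⟩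
  refine (hTc.biUnion fun x _ => hr x).mono fun y hy => ?_
  obtain ⟨x, hx, hxy⟩ := hT.surjOn (Set.mem_image_of_mem _ hy)
  exact Set.mem_biUnion hx (Quotient.exact hxy.symm)

theorem finite_setOf_isIdempotentElem (A : Type*) [CommRing A] [IsArtinianRing A] :
    {e : A | IsIdempotentElem e}.Finite :=
  Set.finite_coe_iff.mp (Finite.of_equiv _ PrimeSpectrum.isIdempotentElemEquivClopens.toEquiv.symm)

section LinearIndependence

variable {K V : Type*} [Field K] [AddCommGroup V] [Module K V]

theorem linearIndependent_triple_iff {u v w : V} : LinearIndependent K ![u, v, w] ↔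
    ∀ a b c : K, a • u + b • v + c • w = 0 → a = 0 ∧ b = 0 ∧ c = 0 := by
  rw [Fintype.linearIndependent_iff]
  refine ⟨fun h a b c habc => ?_, fun h g hg => ?_⟩
  · have := h ![a, b, c] (by simpa [Fin.sum_univ_three] using habc)
    exact ⟨this 0, this 1, this 2⟩
  · have := h (g 0) (g 1) (g 2) (by simpa [Fin.sum_univ_three] using hg)
    exact Fin.forall_fin_succ.mpr ⟨this.1, Fin.forall_fin_two.mpr this.2⟩

theorem linearIndependent_triple_map {W : Type*} [AddCommGroup W] [Module K W] {f : V →ₗ[K] W}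
    (hf : Function.Injective f) {u v w : V} (h : LinearIndependent K ![u, v, w]) :
    LinearIndependent K ![f u, f v, f w] :=
  linearIndependent_triple_iff.mpr fun a b c habc =>
    linearIndependent_triple_iff.mp h a b c (hf (by simpa using habc))

theorem linearIndependent_triple_of_notMem_span {u v w : V} (hu : u ≠ 0)
    (hv : v ∉ Submodule.span K {u}) (hw : w ∉ Submodule.span K {u, v}) :
    LinearIndependent K ![u, v, w] := by
  have huv : LinearIndependent K ![u, v] :=
    (LinearIndependent.pair_iff' hu).mpr fun a ha => hv (Submodule.mem_span_singleton.mpr ⟨a, ha⟩)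
  have hsnoc : ![u, v, w] = Fin.snoc ![u, v] w := by
    ext i
    fin_cases i <;> rfl
  exact hsnoc ▸ huv.finSnoc (by rwa [Matrix.range_cons_cons_empty])

theorem exists_notMem_span_of_card_lt_finrank {s : Finset V} (hs : s.card < Module.finrank K V) :
    ∃ v, v ∉ Submodule.span K (s : Set V) := by
  by_contra! h
  have hcard := finrank_span_finset_le_card (R := K) s
  rw [Set.finrank, Submodule.eq_top_iff'.mpr h, finrank_top] at hcard
  exact hcard.not_gt hs

end LinearIndependence

section UnitTranslates

open scoped Pointwise

variable {K A : Type*} [Field K] [CommRing A] [Algebra K A]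

theorem units_smul_eq_of_le {M : Submodule K A} [FiniteDimensional K M] {a : Aˣ}
    (h : a • M ≤ M) : a • M = M :=
  Submodule.eq_of_le_of_finrank_eq h <|
    (DistribMulAction.toLinearEquiv K A a).finrank_map_eq M

theorem eq_of_units_smul_eq_of_mul_self_le {M N : Submodule K A} [FiniteDimensional K N]
    (hM : 1 ∈ M) (hN : N * N ≤ N) {a : Aˣ} (h : a • M = N) : M = N := by
  have haN : (a : A) ∈ N := by
    have ha : a • (1 : A) ∈ N := h ▸ Submodule.smul_mem_pointwise_smul 1 a M hM
    rwa [Units.smul_def, smul_eq_mul, mul_one] at ha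
  have haN' : a • N ≤ N := by
    rintro _ ⟨y, hy, rfl⟩
    exact hN (Submodule.mul_mem_mul haN hy)
  exact smul_left_cancel a (h.trans (units_smul_eq_of_le haN').symm)

theorem mul_mem_span_triple_of_units_smul_eq {w w' : A} {a : Aˣ}
    (h : a • Submodule.span K {1, w} = Submodule.span K {1, w'})
    (hne : Submodule.span K {1, w} ≠ Submodule.span K {1, w'}) :
    w * w' ∈ Submodule.span K {1, w, w'} := by
  have ha {y} (hy : y ∈ Submodule.span K {1, w}) : a * y ∈ Submodule.span K {1, w'} :=
    h ▸ Submodule.smul_mem_pointwise_smul y a _ hy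
  obtain ⟨p, q, hpq⟩ := Submodule.mem_span_pair.mp
    (ha (Submodule.subset_span (Set.mem_insert 1 {w})))
  obtain ⟨r, t, hrt⟩ := Submodule.mem_span_pair.mp
    (ha (Submodule.subset_span (Set.mem_insert_of_mem 1 rfl)))
  have hq : q ≠ 0 := by
    rintro rfl
    have := FiniteDimensional.span_of_finite K (Set.toFinite {1, w})
    refine hne ((units_smul_eq_of_le ?_).symm.trans h)
    rintro _ ⟨y, hy, rfl⟩
    have hay : a * y = p • y := by
      rw [← mul_one (a : A), ← hpq, zero_smul, add_zero, smul_one_mul]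
    exact Set.mem_of_eq_of_mem hay (Submodule.smul_mem _ p hy)
  refine (Submodule.smul_mem_iff _ hq).mp (Submodule.mem_span_triple.mpr ⟨r, -p, t, ?_⟩)
  simp only [Algebra.smul_def, map_neg] at hpq hrt ⊢
  linear_combination hrt - w * hpq

theorem span_one_pair_mul_self_le {w : A} (hw : w * w ∈ Submodule.span K {1, w}) :
    Submodule.span K {1, w} * Submodule.span K {1, w} ≤ Submodule.span K {1, w} := by
  have hw1 : w ∈ Submodule.span K {1, w} := Submodule.subset_span (Set.mem_insert_of_mem 1 rfl)
  have h1 : (1 : A) ∈ Submodule.span K {1, w} := Submodule.subset_span (Set.mem_insert 1 _)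
  rw [Submodule.span_mul_span, Submodule.span_le]
  rintro _ ⟨y, rfl | rfl, z, rfl | rfl, rfl⟩
  · simpa using h1
  · simpa using hw1
  · simpa using hw1
  · exact hw

theorem mul_self_mem_of_add_smul_mul_add_smul_mem {S : Submodule K A} {u v : A} {α β γ : K}
    (hαβ : α ≠ β) (hβγ : β ≠ γ) (hαγ : α ≠ γ) (h₁ : (u + α • v) * (u + β • v) ∈ S)
    (h₂ : (u + α • v) * (u + γ • v) ∈ S) (h₃ : (u + γ • v) * (u + β • v) ∈ S) : u * u ∈ S := by
  have hα : u * v + α • (v * v) ∈ S := by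
    refine (S.smul_mem_iff (sub_ne_zero.mpr hβγ)).mp ?_
    convert S.sub_mem h₁ h₂ using 1
    simp only [Algebra.smul_def, map_sub]; ring
  have hβ : u * v + β • (v * v) ∈ S := by
    refine (S.smul_mem_iff (sub_ne_zero.mpr hαγ)).mp ?_
    convert S.sub_mem h₁ h₃ using 1
    simp only [Algebra.smul_def, map_sub]; ring
  have hvv : v * v ∈ S := by
    refine (S.smul_mem_iff (sub_ne_zero.mpr hαβ)).mp ?_
    convert S.sub_mem hα hβ using 1
    module
  have huv : u * v ∈ S := (S.add_mem_iff_left (S.smul_mem α hvv)).mp hα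
  convert S.sub_mem h₁ (S.add_mem (S.smul_mem (α + β) huv) (S.smul_mem (α * β) hvv)) using 1
  simp only [Algebra.smul_def, map_add, map_mul]; ring

end UnitTranslates

section Pencil

open scoped Pointwise

variable {K A : Type*} [Field K] [CommRing A] [Algebra K A]

/-- The members `⟨1, u + α v⟩` of the pencil of planes through `1` spanned by `u` and `v`. The plane
with parameter `α` is the image of the linear forms of the ideal `(x, x u + α x v)` under division
by `x`. -/
def pencil (u v : A) (α : K) : Submodule K A :=
  Submodule.span K {1, u + α • v}

theorem mem_pencil {u v a : A} {α : K} :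
    a ∈ pencil u v α ↔ ∃ p q : K, p • 1 + q • (u + α • v) = a :=
  Submodule.mem_span_pair

theorem one_mem_pencil (u v : A) (α : K) : 1 ∈ pencil u v α :=
  Submodule.subset_span (Set.mem_insert _ _)

theorem exists_smul_one_eq_of_mem_pencil {u v a : A} (h : LinearIndependent K ![1, u, v])
    {α β : K} (hαβ : α ≠ β) (hα : a ∈ pencil u v α) (hβ : a ∈ pencil u v β) :
    ∃ p : K, p • 1 = a := by
  obtain ⟨p, q, rfl⟩ := mem_pencil.mp hα
  obtain ⟨p', q', h'⟩ := mem_pencil.mp hβ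
  obtain ⟨-, hq, hqα⟩ := linearIndependent_triple_iff.mp h (p' - p) (q' - q) (q' * β - q * α)
    (by linear_combination (norm := module) h')
  have hq0 : q = 0 := by
    rw [sub_eq_zero.mp hq, ← mul_sub] at hqα
    exact (mul_eq_zero.mp hqα).resolve_right (sub_ne_zero.mpr hαβ.symm)
  exact ⟨p, by rw [hq0, zero_smul, add_zero]⟩

theorem pencil_injective {u v : A} (h : LinearIndependent K ![1, u, v]) :
    Function.Injective (pencil (K := K) u v) := by
  intro α β hαβ
  by_contra hne
  have hα : u + α • v ∈ pencil u v α := Submodule.subset_span (by simp)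
  obtain ⟨p, hp⟩ := exists_smul_one_eq_of_mem_pencil h hne hα (hαβ ▸ hα)
  obtain ⟨-, h1, -⟩ := linearIndependent_triple_iff.mp h (-p) 1 α
    (by linear_combination (norm := module) -hp)
  exact one_ne_zero h1

theorem finite_setOf_idempotent_mem_pencil [FiniteDimensional K A] {u v : A}
    (h : LinearIndependent K ![1, u, v]) :
    {α : K | ∃ e ∈ pencil u v α, IsIdempotentElem e ∧ e ≠ 0 ∧ e ≠ 1}.Finite := by
  have := IsArtinianRing.of_finite K A
  have hsub {e : A} (he : IsIdempotentElem e) (he0 : e ≠ 0) (he1 : e ≠ 1) :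
      {α : K | e ∈ pencil u v α}.Subsingleton := by
    intro α hα β hβ
    by_contra hne
    obtain ⟨p, rfl⟩ := exists_smul_one_eq_of_mem_pencil h hne hα hβ
    have hp : p * p = p := smul_left_injective K (h.ne_zero 0)
      (by simpa [IsIdempotentElem, smul_smul] using he)
    obtain rfl | rfl := IsIdempotentElem.iff_eq_zero_or_one.mp hp
    · exact he0 (zero_smul K 1)
    · exact he1 (one_smul K 1)
  have hfin := (finite_setOf_isIdempotentElem A).subset
    (Set.sep_subset _ fun e => e ≠ 0 ∧ e ≠ 1)
  refine (hfin.biUnion fun e he => (hsub he.1 he.2.1 he.2.2).finite).subset ?_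
  rintro α ⟨e, he, hidem⟩
  exact Set.mem_iUnion₂.mpr ⟨e, hidem, he⟩

theorem subsingleton_setOf_units_smul_pencil_eq {u v : A} (hli : LinearIndependent K ![1, u, v])
    (hsq : ∀ a : A, a * a ∈ Submodule.span K {1, a}) (α : K) :
    {β : K | ∃ a : Aˣ, a • pencil u v α = pencil u v β}.Subsingleton := by
  have heq {β : K} : (∃ a : Aˣ, a • pencil u v α = pencil u v β) → α = β := by
    rintro ⟨a, ha⟩
    have : FiniteDimensional K (pencil u v β) := FiniteDimensional.span_of_finite K (Set.toFinite _)
    exact pencil_injective hli (eq_of_units_smul_eq_of_mul_self_le (one_mem_pencil u v α)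
      (span_one_pair_mul_self_le (hsq _)) ha)
  exact fun β hβ γ hγ => (heq hβ).symm.trans (heq hγ)

theorem mul_mem_span_of_units_smul_pencil_eq {u v : A} (hli : LinearIndependent K ![1, u, v])
    {α β : K} (hαβ : α ≠ β) {a : Aˣ} (h : a • pencil u v α = pencil u v β) :
    (u + α • v) * (u + β • v) ∈ Submodule.span K {1, u, v} := by
  refine Submodule.span_le.mpr ?_
    (mul_mem_span_triple_of_units_smul_eq h ((pencil_injective hli).ne hαβ))
  have hmem (γ : K) : u + γ • v ∈ Submodule.span K {1, u, v} :=
    Submodule.mem_span_triple.mpr ⟨0, 1, γ, by module⟩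
  rintro _ (rfl | rfl | rfl)
  exacts [Submodule.subset_span (Set.mem_insert _ _), hmem α, hmem β]

theorem finite_setOf_units_smul_pencil_eq {u v : A} (hli : LinearIndependent K ![1, u, v])
    (huu : u * u ∉ Submodule.span K {1, u, v}) (α : K) :
    {β : K | ∃ a : Aˣ, a • pencil u v α = pencil u v β}.Finite := by
  refine Set.Finite.of_sdiff (t := {α}) (Set.Subsingleton.finite ?_) (Set.finite_singleton α)
  rintro β ⟨⟨a, ha⟩, hβα⟩ γ ⟨⟨b, hb⟩, hγα⟩
  by_contra hβγ
  have hγβ : (a * b⁻¹) • pencil u v γ = pencil u v β := by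
    rw [← hb, smul_smul, inv_mul_cancel_right, ha]
  exact huu <| mul_self_mem_of_add_smul_mul_add_smul_mem (Ne.symm hβα) hβγ (Ne.symm hγα)
    (mul_mem_span_of_units_smul_pencil_eq hli (Ne.symm hβα) ha)
    (mul_mem_span_of_units_smul_pencil_eq hli (Ne.symm hγα) hb)
    (mul_mem_span_of_units_smul_pencil_eq hli (Ne.symm hβγ) hγβ)

theorem exists_linearIndependent_one_pair (hA : 3 ≤ Module.finrank K A) :
    ∃ u v : A, LinearIndependent K ![1, u, v] := by
  classical
  have : Nontrivial A := Module.nontrivial_of_finrank_pos (R := K) (by omega)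
  obtain ⟨u, hu⟩ := exists_notMem_span_of_card_lt_finrank (K := K) (s := {(1 : A)})
    ((Finset.card_singleton _).trans_lt (by omega))
  obtain ⟨v, hv⟩ := exists_notMem_span_of_card_lt_finrank (K := K) (s := {1, u})
    (Finset.card_le_two.trans_lt (by omega))
  exact ⟨u, v, linearIndependent_triple_of_notMem_span one_ne_zero (by simpa using hu)
    (by simpa using hv)⟩

theorem exists_linearIndependent_mul_self_notMem_span (hA : 4 ≤ Module.finrank K A) {u : A}
    (huu : u * u ∉ Submodule.span K {1, u}) :
    ∃ v : A, LinearIndependent K ![1, u, v] ∧ u * u ∉ Submodule.span K {1, u, v} := by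
  classical
  have : Nontrivial A := Module.nontrivial_of_finrank_pos (R := K) (by omega)
  obtain ⟨v, hv⟩ := exists_notMem_span_of_card_lt_finrank (K := K) (s := {u * u, 1, u})
    (Finset.card_le_three.trans_lt (by omega))
  simp only [Finset.coe_insert, Finset.coe_singleton] at hv
  refine ⟨v, linearIndependent_triple_of_notMem_span one_ne_zero (fun hu => huu ?_)
    (fun h => hv (Submodule.span_mono (Set.subset_insert _ _) h)), fun h => hv ?_⟩
  · obtain ⟨p, rfl⟩ := Submodule.mem_span_singleton.mp hu
    exact Submodule.mem_span_pair.mpr ⟨p * p, 0, by simp [smul_smul]⟩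
  · rw [Set.pair_comm, Set.insert_comm] at h
    exact mem_span_insert_exchange h huu

theorem exists_pencil_finite_setOf_units_smul_eq (hA : 4 ≤ Module.finrank K A) :
    ∃ u v : A, LinearIndependent K ![1, u, v] ∧
      ∀ α : K, {β | ∃ a : Aˣ, a • pencil u v α = pencil u v β}.Finite := by
  by_cases hsq : ∀ a : A, a * a ∈ Submodule.span K {1, a}
  · obtain ⟨u, v, hli⟩ := exists_linearIndependent_one_pair (K := K) (A := A) (by omega)
    exact ⟨u, v, hli, fun α => (subsingleton_setOf_units_smul_pencil_eq hli hsq α).finite⟩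
  · push Not at hsq
    obtain ⟨u, huu⟩ := hsq
    obtain ⟨v, hli, hv⟩ := exists_linearIndependent_mul_self_notMem_span hA huu
    exact ⟨u, v, hli, finite_setOf_units_smul_pencil_eq hli hv⟩

theorem exists_pencil_pairwise_not_units_smul_eq [Uncountable K] (hA : 4 ≤ Module.finrank K A) :
    ∃ u v : A, LinearIndependent K ![1, u, v] ∧ ∃ T : Set K, ¬ T.Countable ∧
      (∀ α ∈ T, ∀ e ∈ pencil u v α, IsIdempotentElem e → e = 0 ∨ e = 1) ∧
      T.Pairwise fun α β => ∀ a : Aˣ, a • pencil u v α ≠ pencil u v β := by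
  have : FiniteDimensional K A := .of_finrank_pos (by omega)
  obtain ⟨u, v, hli, hclass⟩ := exists_pencil_finite_setOf_units_smul_eq hA
  set B : Set K := {α | ∃ e ∈ pencil u v α, IsIdempotentElem e ∧ e ≠ 0 ∧ e ≠ 1}
  have hBc : ¬ Bᶜ.Countable := fun h => Set.not_countable_univ <|
    B.union_compl_self ▸ (finite_setOf_idempotent_mem_pencil hli).countable.union h
  obtain ⟨T, hTB, hT, hpair⟩ := exists_subset_pairwise_not_rel_of_countable_classes
    ((MulAction.orbitRel Aˣ (Submodule K A)).comap (pencil u v)) hBc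
    fun α => (hclass α).countable
  refine ⟨u, v, hli, T, hT, fun α hα e he hidem => ?_, fun α hα β hβ hne a ha => ?_⟩
  · by_contra! h
    exact hTB hα ⟨e, he, hidem, h⟩
  · exact hpair hβ hα hne.symm ⟨a, ha⟩

end Pencil

theorem exists_subalgebra_linearEquiv {K S : Type*} [CommRing K] [CommRing S] [Algebra K S]
    {V : Submodule K S} {x : S} (hx : x ∈ V) (hxreg : x ∈ nonZeroDivisors S)
    (hV : ∀ a ∈ V, ∀ b ∈ V, ∃ c ∈ V, a * b = x * c) :
    ∃ (A : Subalgebra K (FractionRing S)) (φ : A ≃ₗ[K] V),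
      (φ 1 : S) = x ∧ ∀ a b : A, (φ a * φ b : S) = x * φ (a * b) := by
  obtain ⟨t, ht⟩ := IsLocalization.map_units (FractionRing S) ⟨x, hxreg⟩
  let ψ : V →ₗ[K] FractionRing S := LinearMap.mulLeft K ↑t⁻¹ ∘ₗ
    (IsScalarTower.toAlgHom K S (FractionRing S)).toLinearMap ∘ₗ V.subtype
  have hψ (c : V) : t * ψ c = algebraMap S (FractionRing S) c := t.mul_inv_cancel_left _
  have hψinj : Function.Injective ψ := fun c d hcd => Subtype.ext <|
    IsFractionRing.injective S (FractionRing S) <| by rw [← hψ, ← hψ, hcd]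
  have hψ1 : ψ ⟨x, hx⟩ = 1 :=
    t.isUnit.mul_right_injective (by simpa only [mul_one, ht] using hψ ⟨x, hx⟩)
  have hψmul {a b c : V} (h : (a * b : S) = x * c) : ψ a * ψ b = ψ c := by
    refine t.isUnit.mul_right_injective <| t.isUnit.mul_right_injective ?_
    have h' := congrArg (algebraMap S (FractionRing S)) h
    simp only [map_mul, ← hψ, ← ht] at h'
    linear_combination h'
  let A : Subalgebra K (FractionRing S) := (LinearMap.range ψ).toSubalgebra ⟨_, hψ1⟩ <| by
    rintro _ _ ⟨a, rfl⟩ ⟨b, rfl⟩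
    obtain ⟨c, hc, habc⟩ := hV a a.2 b b.2
    exact ⟨⟨c, hc⟩, (hψmul habc).symm⟩
  let φ : A ≃ₗ[K] V := (LinearEquiv.ofInjective ψ hψinj).symm
  have hφ (c : A) : ψ (φ c) = c :=
    congrArg Subtype.val ((LinearEquiv.ofInjective ψ hψinj).apply_symm_apply c)
  refine ⟨A, φ, congrArg Subtype.val (hψinj ((hφ 1).trans hψ1.symm)), fun a b => ?_⟩
  obtain ⟨c, hc, habc⟩ := hV _ (φ a).2 _ (φ b).2
  have hcab : ψ ⟨c, hc⟩ = ψ (φ (a * b)) := by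
    rw [hφ, ← hψmul habc, hφ, hφ]
    rfl
  rw [habc, ← hψinj hcab]

section GradedModules

variable {k R 𝒜}

theorem GrMod.symm_mem_gr {N N' : GrMod k R 𝒜} {e : N.M ≃ₗ[R] N'.M} {s : ℤ}
    (he : ∀ j, ∀ y ∈ N.gr j, e y ∈ N'.gr (j + s)) {j : ℤ} {z : N'.M} (hz : z ∈ N'.gr j) :
    e.symm z ∈ N.gr (j + -s) := by
  classical
  let _ := N.internal.chooseDecomposition
  let _ := N'.internal.chooseDecomposition
  have hcomp (y : N.M) (i : ℤ) : e (DirectSum.decompose N.gr y i : N.M) =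
      (DirectSum.decompose N'.gr (e y) (i + s) : N'.M) := by
    induction y using DirectSum.Decomposition.inductionOn N.gr with
    | zero => simp
    | @homogeneous j y =>
      obtain rfl | hij := eq_or_ne j i
      · rw [DirectSum.decompose_of_mem_same _ y.2,
          DirectSum.decompose_of_mem_same _ (he _ _ y.2)]
      · rw [DirectSum.decompose_of_mem_ne _ y.2 hij,
          DirectSum.decompose_of_mem_ne _ (he _ _ y.2) (by omega), map_zero]
    | add a b ha hb => simp [DirectSum.decompose_add, ha, hb]
  have hzj := hcomp (e.symm z) (j + -s)
  rw [e.apply_symm_apply, neg_add_cancel_right, DirectSum.decompose_of_mem_same _ hz] at hzj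
  rw [← hzj, e.symm_apply_apply]
  exact SetLike.coe_mem _

theorem GrIsoUpToShift.symm {N N' : GrMod k R 𝒜} (h : GrIsoUpToShift k R 𝒜 N N') :
    GrIsoUpToShift k R 𝒜 N' N :=
  let ⟨e, s, he⟩ := h
  ⟨e.symm, -s, fun _ _ => GrMod.symm_mem_gr he⟩

theorem GrIsoUpToShift.trans {N N' N'' : GrMod k R 𝒜} (h : GrIsoUpToShift k R 𝒜 N N')
    (h' : GrIsoUpToShift k R 𝒜 N' N'') : GrIsoUpToShift k R 𝒜 N N'' := by
  obtain ⟨e, s, he⟩ := h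
  obtain ⟨e', s', he'⟩ := h'
  refine ⟨e.trans e', s + s', fun j y hy => ?_⟩
  rw [← add_assoc]
  exact he' _ _ (he _ _ hy)

theorem countable_of_pairwise_not_grIsoUpToShift {m : Ideal R}
    (hR : HasGradedCountableCMType k R 𝒜 m) {ι : Type*} {T : Set ι} {N : ι → GrMod k R 𝒜}
    (hmcm : ∀ i ∈ T, GrMod.IsMCM k R 𝒜 m (N i)) (hindec : ∀ i ∈ T, GrMod.Indec k R 𝒜 (N i))
    (hN : T.Pairwise fun i j => ¬ GrIsoUpToShift k R 𝒜 (N i) (N j)) : T.Countable := by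
  obtain ⟨F, hF⟩ := hR
  choose! f hf using fun i hi => hF (N i) (hmcm i hi) (hindec i hi)
  have hinj : T.InjOn f := fun i hi j hj hij => by
    by_contra hne
    exact hN hi hj hne ((hf i hi).trans (hij ▸ (hf j hj).symm))
  exact Set.countable_of_injective_of_countable_image hinj (Set.to_countable _)

theorem eq_bot_or_eq_bot_of_isCompl {S M : Type*} [Ring S] [AddCommGroup M] [Module S M]
    (h : ∀ π : Module.End S M, IsIdempotentElem π → π = 0 ∨ π = 1) {p q : Submodule S M}
    (hpq : IsCompl p q) : p = ⊥ ∨ q = ⊥ := by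
  refine (h _ (Submodule.isIdempotentElem_projection hpq)).imp (fun h0 => ?_) fun h1 => ?_
  · rw [← Submodule.range_projection hpq, h0, LinearMap.range_zero]
  · rw [← Submodule.ker_projection hpq, h1, Module.End.one_eq_id, LinearMap.ker_id]

end GradedModules

section HomogeneousElements

open DirectSum

variable {k R 𝒜}

theorem dvd_mul_of_gradedIrrelevant_sq_eq {x a b : R}
    (h : gradedIrrelevant k R 𝒜 ^ 2 = Ideal.span {x} * gradedIrrelevant k R 𝒜)
    {i j : ℕ} (hi : 0 < i) (hj : 0 < j) (ha : a ∈ 𝒜 i) (hb : b ∈ 𝒜 j) : x ∣ a * b := by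
  have hab : a * b ∈ gradedIrrelevant k R 𝒜 ^ 2 :=
    pow_two (gradedIrrelevant k R 𝒜) ▸
      Ideal.mul_mem_mul (Ideal.subset_span ⟨i, hi, ha⟩) (Ideal.subset_span ⟨j, hj, hb⟩)
  rw [h] at hab
  exact Ideal.mem_span_singleton.mp (Ideal.mul_le_left hab)

variable [GradedAlgebra 𝒜]

theorem isHomogeneous_span_of_subset {d : ℕ} {S : Set R} (hS : S ⊆ 𝒜 d) :
    (Ideal.span S).IsHomogeneous 𝒜 :=
  Ideal.homogeneous_span 𝒜 S fun _ hs => ⟨d, hS hs⟩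

theorem span_le_irrelevant_of_subset {d : ℕ} (hd : 0 < d) {S : Set R} (hS : S ⊆ 𝒜 d) :
    Ideal.span S ≤ (HomogeneousIdeal.irrelevant 𝒜).toIdeal :=
  Ideal.span_le.mpr fun _ hs => HomogeneousIdeal.mem_irrelevant_of_mem 𝒜 hd (hS hs)

theorem exists_mem_mul_eq_of_dvd {x a : R} (hx : x ∈ 𝒜 1) {d : ℕ} (ha : a ∈ 𝒜 (d + 1))
    (h : x ∣ a) : ∃ c ∈ 𝒜 d, a = x * c := by
  obtain ⟨b, rfl⟩ := h
  refine ⟨decompose 𝒜 b d, SetLike.coe_mem _, ?_⟩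
  rw [mul_comm x (decompose 𝒜 b d : R),
    ← coe_decompose_mul_add_of_right_mem 𝒜 hx, mul_comm b,
    decompose_of_mem_same 𝒜 ha]

theorem eq_of_decompose_eq {a b : R} (h : ∀ i, (decompose 𝒜 a i : R) = decompose 𝒜 b i) : a = b :=
  (decompose 𝒜).injective (DFinsupp.ext fun i => Subtype.ext (h i))

theorem mem_of_decompose_eq_zero {a : R} {d : ℕ} (h : ∀ i ≠ d, (decompose 𝒜 a i : R) = 0) :
    a ∈ 𝒜 d := by
  have had : a = decompose 𝒜 a d := eq_of_decompose_eq (𝒜 := 𝒜) fun i => by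
    obtain rfl | hi := eq_or_ne i d
    · rw [decompose_of_mem_same 𝒜 (SetLike.coe_mem _)]
    · rw [h i hi, decompose_of_mem_ne 𝒜 (SetLike.coe_mem _) hi.symm]
  exact had ▸ SetLike.coe_mem _

end HomogeneousElements

section GradedIdeals

open DirectSum

variable {k R 𝒜} [GradedAlgebra 𝒜]

variable (𝒜) in
/-- The homogeneous elements of degree `j` of the ideal `I`. `GrMod` requires an integer `j`, whence
the encoding: all components in degrees other than `j` vanish, so only `0` is left if `j < 0`. -/
def idealGr (I : Ideal R) (j : ℤ) : AddSubgroup I where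
  carrier := {y | ∀ i : ℕ, (i : ℤ) ≠ j → (decompose 𝒜 (y : R) i : R) = 0}
  zero_mem' i _ := by simp
  add_mem' ha hb i hi := by simp [ha i hi, hb i hi]
  neg_mem' {y} ha i hi := by
    change (decompose 𝒜 (-(y : R)) i : R) = 0
    rw [decompose_neg, DFinsupp.neg_apply, NegMemClass.coe_neg, ha i hi, neg_zero]

theorem mem_idealGr_natCast {I : Ideal R} {d : ℕ} {y : I} :
    y ∈ idealGr 𝒜 I d ↔ (y : R) ∈ 𝒜 d :=
  ⟨fun h => mem_of_decompose_eq_zero fun i hi => h i (mod_cast hi),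
    fun h _ hi => decompose_of_mem_ne 𝒜 h fun hd => hi (congrArg _ hd.symm)⟩

theorem eq_zero_of_mem_idealGr_of_neg {I : Ideal R} {j : ℤ} {y : I} (h : y ∈ idealGr 𝒜 I j)
    (hj : j < 0) : y = 0 :=
  Subtype.ext <| eq_of_decompose_eq (𝒜 := 𝒜) fun i => by rw [h i (by omega)]; simp

theorem isInternal_idealGr {I : Ideal R} (hI : I.IsHomogeneous 𝒜) :
    DirectSum.IsInternal (idealGr 𝒜 I) := by
  classical
  constructor
  · rw [injective_iff_map_eq_zero]
    intro f hf
    have hcomp (f : ⨁ j, idealGr 𝒜 I j) (i : ℕ) :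
        (decompose 𝒜 (DirectSum.coeAddMonoidHom (idealGr 𝒜 I) f : R) i : R) =
          decompose 𝒜 (f i : R) i := by
      induction f using DirectSum.induction_on with
      | zero => simp
      | of j y =>
        obtain rfl | hij := eq_or_ne (i : ℤ) j
        · simp
        · rw [DirectSum.of_eq_of_ne _ _ _ hij, DirectSum.coeAddMonoidHom_of, y.2 i hij]
          simp
      | add f g hf hg => simp [hf, hg]
    ext j
    refine eq_of_decompose_eq (𝒜 := 𝒜) fun i => ?_
    obtain rfl | hij := eq_or_ne (i : ℤ) j
    · rw [← hcomp, hf]; simp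
    · rw [(f j).2 i hij]; simp
  · intro y
    refine ⟨∑ i ∈ (decompose 𝒜 (y : R)).support, DirectSum.of (fun j => idealGr 𝒜 I j) (i : ℤ)
      ⟨⟨decompose 𝒜 (y : R) i, hI i y.2⟩, mem_idealGr_natCast.mpr (SetLike.coe_mem _)⟩, ?_⟩
    apply Subtype.ext
    simp only [map_sum, DirectSum.coeAddMonoidHom_of, AddSubmonoidClass.coe_finsetSum]
    exact sum_support_decompose 𝒜 (y : R)

/-- A homogeneous ideal as a graded module, with the grading inherited from the ring. -/
def idealGrMod (I : Ideal R) (hI : I.IsHomogeneous 𝒜) : GrMod k R 𝒜 where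
  M := I
  gr := idealGr 𝒜 I
  internal := isInternal_idealGr hI
  smul_mem i j r y hr hy l hl := by
    rw [Submodule.coe_smul, smul_eq_mul, mul_comm]
    by_cases hil : i ≤ l
    · obtain ⟨l, rfl⟩ := Nat.exists_eq_add_of_le' hil
      rw [coe_decompose_mul_add_of_right_mem 𝒜 hr, hy l (by push_cast at hl; omega), zero_mul]
    · exact coe_decompose_mul_of_right_mem_of_not_le 𝒜 hr hil

theorem grIsoUpToShift_idealGrMod_iff {I J : Ideal R} {hI : I.IsHomogeneous 𝒜}
    {hJ : J.IsHomogeneous 𝒜} :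
    GrIsoUpToShift k R 𝒜 (idealGrMod I hI) (idealGrMod J hJ) ↔
      ∃ (e : I ≃ₗ[R] J) (s : ℤ), ∀ j, ∀ y ∈ idealGr 𝒜 I j, e y ∈ idealGr 𝒜 J (j + s) :=
  Iff.rfl

theorem GrIdealIsoUpToShift.grIsoUpToShift {I J : Ideal R} (h : GrIdealIsoUpToShift k R 𝒜 I J)
    (hI : I.IsHomogeneous 𝒜) (hJ : J.IsHomogeneous 𝒜) :
    GrIsoUpToShift k R 𝒜 (idealGrMod I hI) (idealGrMod J hJ) := by
  obtain ⟨e, s, he⟩ := h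
  refine grIsoUpToShift_idealGrMod_iff.mpr ⟨e, s, fun j y hy => ?_⟩
  obtain ⟨d, rfl⟩ | hj : (∃ d : ℕ, j = d) ∨ j < 0 :=
    (le_or_gt 0 j).imp_left Int.eq_ofNat_of_zero_le
  · obtain ⟨d', hd', hy'⟩ := he d y (mem_idealGr_natCast.mp hy)
    exact hd' ▸ mem_idealGr_natCast.mpr hy'
  · rw [eq_zero_of_mem_idealGr_of_neg hy hj, map_zero]
    exact zero_mem _

theorem idealGrMod_isMCM {m I : Ideal R} (hI : I.IsHomogeneous 𝒜) (hfg : I.FG) (hI0 : I ≠ ⊥)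
    {x : R} (hxm : x ∈ m) (hxreg : x ∈ nonZeroDivisors R) :
    GrMod.IsMCM k R 𝒜 m (idealGrMod I hI) :=
  ⟨Module.Finite.iff_fg.mpr hfg, (Submodule.nontrivial_iff_ne_bot (p := I)).mpr hI0, x, hxm,
    fun _ hy => Subtype.ext <|
      (mul_left_mem_nonZeroDivisors_eq_zero_iff hxreg).mp (congrArg Subtype.val hy)⟩

end GradedIdeals

section LinearForms

open DirectSum
open scoped Pointwise

theorem mul_map_eq_mul_map {S : Type*} [CommRing S] {I J : Ideal S} (g : I →ₗ[S] J) (y z : I) :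
    (y : S) * g z = z * g y := by
  have h : (y : S) • z = (z : S) • y := Subtype.ext (mul_comm _ _)
  have hg : (y : S) • g z = (z : S) • g y := by rw [← map_smul, h, map_smul]
  exact congrArg Subtype.val hg

variable {k R 𝒜}

section Multiplication

variable {A : Type*} [CommRing A] [Algebra k A] {φ : A ≃ₗ[k] 𝒜 1}

variable (φ) in
/-- The linear forms of `R` that lie in the ideal `I`, read in `A` through the identification `φ`
of `A` with the space of linear forms; `φ` is meant to be multiplication by the linear form
`φ 1`. -/
def linearPart (I : Ideal R) : Submodule k A :=
  (I.restrictScalars k).comap ((𝒜 1).subtype ∘ₗ φ.toLinearMap)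

theorem mem_linearPart {I : Ideal R} {a : A} : a ∈ linearPart φ I ↔ (φ a : R) ∈ I := Iff.rfl

theorem exists_forall_map_eq_mul (hreg : (φ 1 : R) ∈ nonZeroDivisors R)
    (hφ : ∀ a b, (φ a * φ b : R) = φ 1 * φ (a * b)) {I J : Ideal R} (hI : (φ 1 : R) ∈ I)
    (g : I →ₗ[R] J) (hg : (g ⟨φ 1, hI⟩ : R) ∈ 𝒜 1) :
    ∃ a : A, ∀ b (hb : (φ b : R) ∈ I), (g ⟨φ b, hb⟩ : R) = φ (a * b) := by
  obtain ⟨a, ha⟩ := φ.surjective ⟨_, hg⟩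
  refine ⟨a, fun b hb => (mul_cancel_left_mem_nonZeroDivisors hreg).mp ?_⟩
  rw [← hφ, ha, mul_comm _ (φ b : R)]
  exact mul_map_eq_mul_map g ⟨φ 1, hI⟩ ⟨φ b, hb⟩

end Multiplication

variable [GradedAlgebra 𝒜]

theorem decompose_one_mem_span (h0 : 𝒜 0 = 1) {S : Set R} (hS : S ⊆ 𝒜 1) {f : R}
    (hf : f ∈ Ideal.span S) : (decompose 𝒜 f 1 : R) ∈ Submodule.span k S := by
  induction hf using Submodule.closure_induction with
  | zero => simp
  | add f g _ _ hf hg => simpa using add_mem hf hg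
  | smul_mem r s hs =>
    obtain ⟨c, hc⟩ : ∃ c : k, algebraMap k R c = decompose 𝒜 r 0 :=
      Submodule.mem_one.mp (h0.le (SetLike.coe_mem _))
    have hrs := coe_decompose_mul_add_of_right_mem 𝒜 (a := r) (i := 0) (hS hs)
    rw [zero_add] at hrs
    rw [smul_eq_mul, hrs, ← hc, ← Algebra.smul_def]
    exact Submodule.smul_mem _ c (Submodule.subset_span hs)

theorem eq_zero_of_mul_self_eq {x f : R} (hx : x ∈ 𝒜 1) (hxreg : x ∈ nonZeroDivisors R)
    (hf : f * f = x * f) (hf0 : (decompose 𝒜 f 0 : R) = 0) (hf1 : (decompose 𝒜 f 1 : R) = 0) :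
    f = 0 := by
  refine eq_of_decompose_eq (𝒜 := 𝒜) fun d => ?_
  rw [decompose_zero, DirectSum.zero_apply, ZeroMemClass.coe_zero]
  induction d using Nat.strong_induction_on with
  | _ d ih =>
    obtain hd | hd := le_or_gt d 1
    · interval_cases d <;> assumption
    refine (mul_right_mem_nonZeroDivisors_eq_zero_iff hxreg).mp ?_
    have hlow : ∀ i < d, decompose 𝒜 f i = 0 := fun i hi => Subtype.ext (ih i hi)
    rw [← coe_decompose_mul_add_of_right_mem 𝒜 hx, mul_comm, ← hf, decompose_mul,
      mul_apply_eq_zero hlow hlow (by omega), ZeroMemClass.coe_zero]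

theorem decompose_one_mul_self_eq {x f : R} (hx : x ∈ 𝒜 1) (hf : f * f = x * f)
    (hf0 : (decompose 𝒜 f 0 : R) = 0) :
    (decompose 𝒜 f 1 * decompose 𝒜 f 1 : R) = x * decompose 𝒜 f 1 := by
  calc (decompose 𝒜 f 1 * decompose 𝒜 f 1 : R) = decompose 𝒜 (f * f) (1 + 1) := by
        rw [decompose_mul, coe_mul_apply_eq_sum_antidiagonal,
          Finset.Nat.sum_antidiagonal_eq_sum_range_succ_mk]
        simp [Finset.sum_range_succ, hf0]
    _ = x * decompose 𝒜 f 1 := by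
        rw [hf, mul_comm, coe_decompose_mul_add_of_right_mem 𝒜 hx, mul_comm]

theorem shift_nonneg_of_le_irrelevant {I J : Ideal R}
    (hJ : J ≤ (HomogeneousIdeal.irrelevant 𝒜).toIdeal) {e : I ≃ₗ[R] J} {s : ℤ}
    (he : ∀ j, ∀ y ∈ idealGr 𝒜 I j, e y ∈ idealGr 𝒜 J (j + s)) {x : I} (hx : (x : R) ∈ 𝒜 1)
    (hx0 : x ≠ 0) : 0 ≤ s := by
  by_contra! hs
  refine hx0 (e.map_eq_zero_iff.mp (Subtype.ext (eq_of_decompose_eq (𝒜 := 𝒜) fun i => ?_)))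
  rw [ZeroMemClass.coe_zero, decompose_zero, DirectSum.zero_apply, ZeroMemClass.coe_zero]
  obtain rfl | hi := Nat.eq_zero_or_pos i
  · exact (HomogeneousIdeal.mem_irrelevant_iff 𝒜 _).mp (hJ (e x).2)
  · exact he 1 x (mem_idealGr_natCast (d := 1).mpr hx) i (by omega)

variable {A : Type*} [CommRing A] [Algebra k A] {φ : A ≃ₗ[k] 𝒜 1}

theorem linearPart_span_pair (h0 : 𝒜 0 = 1) (a b : A) :
    linearPart φ (Ideal.span {(φ a : R), (φ b : R)}) = Submodule.span k {a, b} := by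
  ext c
  constructor
  · intro hc
    have hS : {(φ a : R), (φ b : R)} ⊆ (𝒜 1 : Set R) := Set.pair_subset (φ a).2 (φ b).2
    have hc1 := decompose_one_mem_span h0 hS hc
    obtain ⟨p, q, hpq⟩ := Submodule.mem_span_pair.mp hc1
    refine Submodule.mem_span_pair.mpr ⟨p, q, φ.injective (Subtype.ext ?_)⟩
    simpa using hpq
  · refine fun hc => Submodule.span_le.mpr (Set.pair_subset ?_ ?_) hc
    · exact Ideal.subset_span (Set.mem_insert _ _)
    · exact Ideal.subset_span (Set.mem_insert_of_mem _ rfl)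

variable (hreg : (φ 1 : R) ∈ nonZeroDivisors R)
  (hφ : ∀ a b, (φ a * φ b : R) = φ 1 * φ (a * b))
include hreg hφ

theorem exists_units_smul_linearPart_eq [Nontrivial A] {I J : Ideal R} {hI : I.IsHomogeneous 𝒜}
    {hJ : J.IsHomogeneous 𝒜} (hIirr : I ≤ (HomogeneousIdeal.irrelevant 𝒜).toIdeal)
    (hJirr : J ≤ (HomogeneousIdeal.irrelevant 𝒜).toIdeal) (hφI : (φ 1 : R) ∈ I)
    (hφJ : (φ 1 : R) ∈ J) (h : GrIsoUpToShift k R 𝒜 (idealGrMod I hI) (idealGrMod J hJ)) :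
    ∃ a : Aˣ, a • linearPart φ I = linearPart φ J := by
  obtain ⟨e, s, he⟩ := grIsoUpToShift_idealGrMod_iff.mp h
  have he' : ∀ j, ∀ z ∈ idealGr 𝒜 J j, e.symm z ∈ idealGr 𝒜 I (j + -s) := fun j z hz =>
    GrMod.symm_mem_gr (N := idealGrMod I hI) (N' := idealGrMod J hJ) he hz
  have hs : s = 0 := by
    have h1 := shift_nonneg_of_le_irrelevant hJirr he (x := ⟨φ 1, hφI⟩) (φ 1).2 (by simp)
    have h2 := shift_nonneg_of_le_irrelevant hIirr he' (x := ⟨φ 1, hφJ⟩) (φ 1).2 (by simp)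
    omega
  subst hs
  simp only [neg_zero, add_zero] at he he'
  obtain ⟨a, ha⟩ := exists_forall_map_eq_mul hreg hφ hφI e.toLinearMap
    (mem_idealGr_natCast.mp (he (1 : ℕ) _ (mem_idealGr_natCast.mpr (φ 1).2)))
  obtain ⟨b, hb⟩ := exists_forall_map_eq_mul hreg hφ hφJ e.symm.toLinearMap
    (mem_idealGr_natCast.mp (he' (1 : ℕ) _ (mem_idealGr_natCast.mpr (φ 1).2)))
  have haI {c : A} (hc : c ∈ linearPart φ I) : a * c ∈ linearPart φ J := by
    rw [mem_linearPart, ← ha c hc]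
    exact SetLike.coe_mem _
  have hbJ {c : A} (hc : c ∈ linearPart φ J) : b * c ∈ linearPart φ I := by
    rw [mem_linearPart, ← hb c hc]
    exact SetLike.coe_mem _
  have hea : ⟨φ (a * 1), haI hφI⟩ = e ⟨φ 1, hφI⟩ := Subtype.ext (ha 1 hφI).symm
  have hba : b * a = 1 := by
    refine φ.injective (Subtype.ext ?_)
    have h1 := hb _ (haI hφI)
    rw [hea, LinearEquiv.coe_coe, e.symm_apply_apply, mul_one] at h1
    exact h1.symm
  refine ⟨⟨a, b, mul_comm a b ▸ hba, hba⟩, le_antisymm ?_ fun c hc => ?_⟩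
  · rintro _ ⟨c, hc, rfl⟩
    exact haI hc
  · exact ⟨b * c, hbJ hc, by simp [← mul_assoc, mul_comm a b, hba]⟩

theorem eq_zero_or_eq_one_of_isIdempotentElem_end {I : Ideal R} (hI : I.IsHomogeneous 𝒜)
    (hIirr : I ≤ (HomogeneousIdeal.irrelevant 𝒜).toIdeal) (hφI : (φ 1 : R) ∈ I)
    (hidem : ∀ a ∈ linearPart φ I, IsIdempotentElem a → a = 0 ∨ a = 1)
    {π : Module.End R I} (hπ : IsIdempotentElem π) : π = 0 ∨ π = 1 := by
  obtain ⟨f, hf⟩ : ∃ f : I, f = π ⟨φ 1, hφI⟩ := ⟨_, rfl⟩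
  have hπf (y : I) : φ 1 * (π y : R) = y * f := hf ▸ mul_map_eq_mul_map π ⟨φ 1, hφI⟩ y
  have hff : (f * f : R) = φ 1 * f := by
    rw [← hπf, hf, ← Module.End.mul_apply, hπ.eq]
  have hf0 : (decompose 𝒜 (f : R) 0 : R) = 0 :=
    (HomogeneousIdeal.mem_irrelevant_iff 𝒜 _).mp (hIirr f.2)
  obtain ⟨a, ha⟩ := φ.surjective (decompose 𝒜 (f : R) 1)
  have haI : a ∈ linearPart φ I := by
    rw [mem_linearPart, ha]
    exact hI 1 f.2
  have haa : IsIdempotentElem a := by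
    refine φ.injective (Subtype.ext ((mul_cancel_left_mem_nonZeroDivisors hreg).mp ?_))
    rw [← hφ, ha]
    exact decompose_one_mul_self_eq (φ 1).2 hff hf0
  obtain rfl | rfl := hidem a haI haa
  · have hf' : (f : R) = 0 := eq_zero_of_mul_self_eq (φ 1).2 hreg hff hf0 (by rw [← ha]; simp)
    refine .inl (LinearMap.ext fun y => Subtype.ext ?_)
    refine (mul_left_mem_nonZeroDivisors_eq_zero_iff hreg).mp ?_
    rw [hπf, hf', mul_zero]
  · have hf' : (φ 1 - f : R) = 0 := by
      refine eq_zero_of_mul_self_eq (𝒜 := 𝒜) (φ 1).2 hreg (by linear_combination hff) ?_ ?_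
      · exact (HomogeneousIdeal.mem_irrelevant_iff 𝒜 _).mp (hIirr (sub_mem hφI f.2))
      · simp [decompose_sub, ← ha]
    refine .inr (LinearMap.ext fun y => Subtype.ext ?_)
    refine (mul_cancel_left_mem_nonZeroDivisors hreg).mp ?_
    rw [hπf, ← sub_eq_zero.mp hf', mul_comm, Module.End.one_apply]

theorem idealGrMod_indec [Nontrivial A] {I : Ideal R} (hI : I.IsHomogeneous 𝒜)
    (hIirr : I ≤ (HomogeneousIdeal.irrelevant 𝒜).toIdeal) (hφI : (φ 1 : R) ∈ I)
    (hidem : ∀ a ∈ linearPart φ I, IsIdempotentElem a → a = 0 ∨ a = 1) :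
    GrMod.Indec k R 𝒜 (idealGrMod I hI) :=
  ⟨⟨⟨φ 1, hφI⟩, 0, fun h => (by simp : (φ 1 : R) ≠ 0) (congrArg Subtype.val h)⟩,
    fun _ _ => eq_bot_or_eq_bot_of_isCompl fun _ =>
      eq_zero_or_eq_one_of_isIdempotentElem_end hreg hφ hI hIirr hφI hidem⟩

end LinearForms

section PencilIdeals

variable {k R 𝒜} {A : Type*} [CommRing A] [Algebra k A]

/-- The ideal `(x, φ u + α φ v)` with `x = φ 1`, whose linear forms are `φ (pencil u v α)`. -/
def pencilIdeal (φ : A ≃ₗ[k] 𝒜 1) (u v : A) (α : k) : Ideal R :=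
  Ideal.span {(φ 1 : R), (φ u : R) + α • φ v}

variable {φ : A ≃ₗ[k] 𝒜 1}

theorem map_one_mem_pencilIdeal (u v : A) (α : k) : (φ 1 : R) ∈ pencilIdeal φ u v α :=
  Ideal.subset_span (Set.mem_insert _ _)

variable [GradedAlgebra 𝒜]

theorem pencilIdeal_isHomogeneous (u v : A) (α : k) : (pencilIdeal φ u v α).IsHomogeneous 𝒜 :=
  isHomogeneous_span_of_subset (Set.pair_subset (φ 1).2 (φ u + α • φ v).2)

theorem pencilIdeal_le_irrelevant (u v : A) (α : k) :
    pencilIdeal φ u v α ≤ (HomogeneousIdeal.irrelevant 𝒜).toIdeal :=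
  span_le_irrelevant_of_subset one_pos (Set.pair_subset (φ 1).2 (φ u + α • φ v).2)

theorem linearPart_pencilIdeal (h0 : 𝒜 0 = 1) (u v : A) (α : k) :
    linearPart φ (pencilIdeal φ u v α) = pencil u v α := by
  rw [pencil, ← linearPart_span_pair (φ := φ) h0, map_add, map_smul, Submodule.coe_add,
    Submodule.coe_smul]
  rfl

/-- The ideal `pencilIdeal φ u v α` as a graded module. -/
def pencilGrMod (φ : A ≃ₗ[k] 𝒜 1) (u v : A) (α : k) : GrMod k R 𝒜 :=
  idealGrMod (pencilIdeal φ u v α) (pencilIdeal_isHomogeneous u v α)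

variable {u v : A} {α β : k}

theorem pencilGrMod_isMCM [Nontrivial A] (hreg : (φ 1 : R) ∈ nonZeroDivisors R) :
    GrMod.IsMCM k R 𝒜 (gradedIrrelevant k R 𝒜) (pencilGrMod φ u v α) :=
  idealGrMod_isMCM _ (Submodule.fg_span (Set.toFinite _))
    (Submodule.ne_bot_iff _ |>.mpr ⟨φ 1, map_one_mem_pencilIdeal u v α, by simp⟩)
    (Ideal.subset_span ⟨1, one_pos, (φ 1).2⟩) hreg

variable (h0 : 𝒜 0 = 1) (hreg : (φ 1 : R) ∈ nonZeroDivisors R)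
  (hφ : ∀ a b, (φ a * φ b : R) = φ 1 * φ (a * b))
include h0 hreg hφ

theorem pencilGrMod_indec [Nontrivial A]
    (hidem : ∀ a ∈ pencil u v α, IsIdempotentElem a → a = 0 ∨ a = 1) :
    GrMod.Indec k R 𝒜 (pencilGrMod φ u v α) :=
  idealGrMod_indec hreg hφ _ (pencilIdeal_le_irrelevant u v α) (map_one_mem_pencilIdeal u v α)
    (by rwa [linearPart_pencilIdeal h0])

open scoped Pointwise in
theorem exists_units_smul_pencil_eq [Nontrivial A]
    (h : GrIsoUpToShift k R 𝒜 (pencilGrMod φ u v α) (pencilGrMod φ u v β)) :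
    ∃ a : Aˣ, a • pencil u v α = pencil u v β := by
  rw [← linearPart_pencilIdeal h0, ← linearPart_pencilIdeal h0]
  exact exists_units_smul_linearPart_eq hreg hφ (pencilIdeal_le_irrelevant u v α)
    (pencilIdeal_le_irrelevant u v β) (map_one_mem_pencilIdeal u v α)
    (map_one_mem_pencilIdeal u v β) h

end PencilIdeals

theorem stmt12_general [Uncountable k] [GradedAlgebra 𝒜] (h0 : 𝒜 0 = 1)
    {x : R} (hx : x ∈ 𝒜 1) (hxreg : x ∈ nonZeroDivisors R)
    (hmul : ∀ a ∈ 𝒜 1, ∀ b ∈ 𝒜 1, x ∣ a * b) (hrank : 4 ≤ Module.finrank k (𝒜 1)) :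
    (∃ u v : R, u ∈ 𝒜 1 ∧ v ∈ 𝒜 1 ∧ LinearIndependent k ![x, u, v] ∧
      ∃ T : Set k, ¬ T.Countable ∧ ∀ α ∈ T, ∀ β ∈ T, α ≠ β →
        ¬ GrIdealIsoUpToShift k R 𝒜
            (Ideal.span {x, u + α • v}) (Ideal.span {x, u + β • v})) ∧
    ¬ HasGradedCountableCMType k R 𝒜 (gradedIrrelevant k R 𝒜) := by
  obtain ⟨A, φ, rfl, hφ⟩ := exists_subalgebra_linearEquiv hx hxreg fun a ha b hb =>
    exists_mem_mul_eq_of_dvd hx (SetLike.mul_mem_graded ha hb) (hmul a ha b hb)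
  rw [← φ.finrank_eq] at hrank
  have : Nontrivial A := Module.nontrivial_of_finrank_pos (R := k) (by omega)
  obtain ⟨u, v, hli, T, hT, hidem, hpair⟩ := exists_pencil_pairwise_not_units_smul_eq hrank
  have hnot : T.Pairwise fun α β =>
      ¬ GrIsoUpToShift k R 𝒜 (pencilGrMod φ u v α) (pencilGrMod φ u v β) := by
    intro α hα β hβ hne h
    obtain ⟨a, ha⟩ := exists_units_smul_pencil_eq h0 hxreg hφ h
    exact hpair hα hβ hne a ha
  refine ⟨⟨φ u, φ v, (φ u).2, (φ v).2, ?_, T, hT, fun α hα β hβ hne h =>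
    hnot hα hβ hne (h.grIsoUpToShift _ _)⟩, fun hR => hT ?_⟩
  · exact linearIndependent_triple_map (f := (𝒜 1).subtype ∘ₗ φ.toLinearMap)
      (Subtype.val_injective.comp φ.injective) hli
  · exact countable_of_pairwise_not_grIsoUpToShift hR (fun α _ => pencilGrMod_isMCM hxreg)
      (fun α hα => pencilGrMod_indec h0 hxreg hφ (hidem α hα)) hnot

/-- Let `(R, m, k)` be a one-dimensional Cohen-Macaulay standard graded
ring over an uncountable field `k` with h-vector `(1, n)`, `n ≥ 3` — equivalently, `R` has
minimal multiplicity (`m² = xm` for a linear nonzerodivisor `x`) and embedding dimension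
`n + 1 ≥ 4` (`dim_k 𝒜₁ = n + 1`).  Then there are linear forms `u, v` such that `x, u, v` are
part of a basis of `m/m²`, and an uncountable subset `T ⊆ k` such that the graded ideals
`I_α = (x, u + αv)`, `α ∈ T`, are pairwise non-isomorphic as graded modules even up to shift.
In particular `R` is not of graded countable Cohen-Macaulay type. -/
theorem stmt12 [Uncountable k] [GradedAlgebra 𝒜]
    (hstd0 : 𝒜 0 = (1 : Submodule k R))
    (hstd : ∀ i : ℕ, 𝒜 (i + 1) = 𝒜 1 * 𝒜 i)
    (hdim : ringKrullDim R = 1)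
    (n : ℕ) (hn : 3 ≤ n)
    (x : R) (hx1 : x ∈ 𝒜 1) (hxreg : x ∈ nonZeroDivisors R)
    (hmin : (gradedIrrelevant k R 𝒜) ^ 2 = Ideal.span {x} * gradedIrrelevant k R 𝒜)
    (hemb : Module.finrank k (𝒜 1) = n + 1) :
    (∃ u v : R, u ∈ 𝒜 1 ∧ v ∈ 𝒜 1 ∧ LinearIndependent k ![x, u, v] ∧
      ∃ T : Set k, ¬ T.Countable ∧ ∀ α ∈ T, ∀ β ∈ T, α ≠ β →
        ¬ GrIdealIsoUpToShift k R 𝒜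
            (Ideal.span {x, u + α • v}) (Ideal.span {x, u + β • v})) ∧
    ¬ HasGradedCountableCMType k R 𝒜 (gradedIrrelevant k R 𝒜) := by
  exact stmt12_general k R 𝒜 hstd0 hx1 hxreg
    (fun _ ha _ hb => dvd_mul_of_gradedIrrelevant_sq_eq hmin one_pos one_pos ha hb) (by omega)
end

section
/- Let (R,m) be a zero-dimensional equicharacteristic complete local ring. Then R has finite Cohen-Macaulay type if and only if R is a hypersurface, i.e., R ≅ k⟦x⟧/(x^m) for some m ≥ 0 (where residue field k), equivalently dim_k(m/m²) ≤ 1. -/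
open IsLocalRing

/-- A module is indecomposable. -/
def IsIndecomposableModule (R M : Type*) [Ring R] [AddCommGroup M] [Module R M] : Prop :=
  Nontrivial M ∧ ∀ p q : Submodule R M, IsCompl p q → p = ⊥ ∨ q = ⊥

/-- A zero-dimensional local ring has finite Cohen-Macaulay type: there are only finitely
many indecomposable finitely generated (equivalently, maximal Cohen-Macaulay) modules up to
isomorphism. -/
def HasFiniteCMType0 (R : Type) [CommRing R] : Prop :=
  ∃ s : Set (ModuleCat R), s.Finite ∧
    ∀ N : ModuleCat R, Module.Finite R N → IsIndecomposableModule R N →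
      ∃ M ∈ s, Nonempty ((N : Type) ≃ₗ[R] (M : Type))

/-!
If the maximal ideal is `(t)`, then an element whose annihilator is that of the whole module
generates a direct summand: modulo a maximal submodule meeting it trivially it generates an
essential submodule, and lifting from `t • y` to `y` shows that this submodule is everything. Hence,
when `t` is nilpotent, indecomposable modules are cyclic, of the form `R / (t ^ c)`.

If the cotangent space has dimension at least two, choose `a, b` in the maximal ideal `m` with
independent classes, and coordinate functionals `α, β : m → k` dual to them. For an endomorphism `N`
of `kⁿ` the quotient of `Rⁿ` by `{w ∈ mⁿ | α w + N (β w) = 0}` has head `kⁿ`, and there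
`b • x = a • y` says exactly that `y ≡ N x` on the head. A direct sum decomposition of this module
therefore induces an `N`-invariant decomposition of `kⁿ`, which is impossible when `N` is a single
nilpotent Jordan block. The size `n` of the block is arbitrary and is recovered as the length of
the head.
-/

section Nilpotent

variable {R V : Type*} [Semiring R] [AddCommMonoid V] [Module R V] {f : Module.End R V}

theorem ker_le_of_isNilpotent_of_mem_invtSubmodule (hf : IsNilpotent f)
    (hker : IsAtom (LinearMap.ker f)) {W : Submodule R V} (hW : W ∈ f.invtSubmodule)
    (hne : W ≠ ⊥) : LinearMap.ker f ≤ W := by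
  refine hker.not_disjoint_iff_le.mp fun hdisj => hne ?_
  have hpow : ∀ n, ∀ w ∈ W, (f ^ n) w = 0 → w = 0 := by
    intro n
    induction n with
    | zero => exact fun w _ h => h
    | succ n ih =>
      intro w hw h
      rw [pow_succ, Module.End.mul_apply] at h
      exact Submodule.disjoint_def.mp hdisj w (ih _ (hW hw) h) hw
  obtain ⟨n, hn⟩ := hf
  exact W.eq_bot_iff.mpr fun w hw => hpow n w hw (by rw [hn, LinearMap.zero_apply])

theorem eq_bot_or_eq_bot_of_isNilpotent_of_disjoint (hf : IsNilpotent f)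
    (hker : IsAtom (LinearMap.ker f)) {P Q : Submodule R V} (hP : P ∈ f.invtSubmodule)
    (hQ : Q ∈ f.invtSubmodule) (hPQ : Disjoint P Q) : P = ⊥ ∨ Q = ⊥ := by
  by_contra! hne
  exact hker.1 (le_bot_iff.mp (hPQ
    (ker_le_of_isNilpotent_of_mem_invtSubmodule hf hker hP hne.1)
    (ker_le_of_isNilpotent_of_mem_invtSubmodule hf hker hQ hne.2)))

end Nilpotent

section Shift

variable (R V : Type*) (n : ℕ)

section Semiring

variable [Semiring R] [AddCommMonoid V] [Module R V]

/-- The right shift `(v₀, …, vₙ) ↦ (0, v₀, …, vₙ₋₁)`: a nilpotent Jordan block of size `n + 1`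
with entries in the endomorphisms of `V`. -/
def rightShift : Module.End R (Fin (n + 1) → V) where
  toFun v := Fin.cons 0 (Fin.init v)
  map_add' u v := by
    ext i
    cases i using Fin.cases <;> simp [Fin.init]
  map_smul' r v := by
    ext i
    cases i using Fin.cases <;> simp [Fin.init]

theorem rightShift_apply (v : Fin (n + 1) → V) :
    rightShift R V n v = Fin.cons 0 (Fin.init v) :=
  rfl

theorem rightShift_pow_apply_eq_zero {j : ℕ} (v : Fin (n + 1) → V) {i : Fin (n + 1)}
    (hi : (i : ℕ) < j) : (rightShift R V n ^ j) v i = 0 := by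
  induction j generalizing i with
  | zero => exact absurd hi (Nat.not_lt_zero _)
  | succ j ih =>
    rw [pow_succ', Module.End.mul_apply, rightShift_apply]
    cases i using Fin.cases with
    | zero => rfl
    | succ i => exact ih (i := i.castSucc) (Nat.lt_of_succ_lt_succ hi)

theorem isNilpotent_rightShift : IsNilpotent (rightShift R V n) :=
  ⟨n + 1, LinearMap.ext fun v => funext fun i => rightShift_pow_apply_eq_zero R V n v i.isLt⟩

theorem ker_rightShift :
    LinearMap.ker (rightShift R V n) = LinearMap.range (LinearMap.single R _ (Fin.last n)) := by
  ext v
  constructor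
  · intro hv
    refine ⟨v (Fin.last n), funext fun i => ?_⟩
    cases i using Fin.lastCases with
    | last => simp
    | cast i =>
      have hvi : v i.castSucc = 0 := congrFun hv i.succ
      simp [hvi, i.castSucc_ne_last]
  · rintro ⟨c, rfl⟩
    ext i
    cases i using Fin.cases <;> simp [rightShift_apply, Fin.init, Fin.castSucc_ne_last]

end Semiring

theorem isAtom_ker_rightShift [Ring R] [AddCommGroup V] [Module R V] [IsSimpleModule R V] :
    IsAtom (LinearMap.ker (rightShift R V n)) := by
  rw [ker_rightShift, ← isSimpleModule_iff_isAtom]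
  exact .congr (LinearEquiv.ofInjective (LinearMap.single R (fun _ => V) (Fin.last n))
    (Pi.single_injective (M := fun _ => V) (Fin.last n))).symm

end Shift

section Head

variable {R M V : Type*} [CommRing R] [AddCommGroup M] [Module R M] [AddCommGroup V] [Module R V]
  {I : Ideal R} {p : M →ₗ[R] V} {P Q : Submodule R M}

theorem projection_mem_smul_of_mem_smul_top (h : IsCompl P Q) {x : M}
    (hx : x ∈ I • (⊤ : Submodule R M)) : P.projection Q h x ∈ I • P := by
  have := Submodule.mem_map_of_mem (f := P.projection Q h) hx
  rwa [Submodule.map_smul'', Submodule.map_top, Submodule.range_projection] at this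

theorem disjoint_map_of_ker_eq_smul_top (hker : LinearMap.ker p = I • ⊤) (h : IsCompl P Q) :
    Disjoint (P.map p) (Q.map p) := by
  rw [Submodule.disjoint_def]
  rintro _ ⟨x, hx, rfl⟩ ⟨y, hy, hyx⟩
  have hxy : x - y ∈ I • (⊤ : Submodule R M) := by
    rw [← hker, LinearMap.mem_ker, map_sub, hyx, sub_self]
  have hx_mem := projection_mem_smul_of_mem_smul_top h hxy
  rw [map_sub, Submodule.projection_apply_of_mem_left h hx,
    (Submodule.projection_apply_eq_zero_iff h).mpr hy, sub_zero] at hx_mem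
  rw [← LinearMap.mem_ker, hker]
  exact Submodule.smul_mono le_rfl le_top hx_mem

theorem eq_bot_of_isCompl_of_map_eq_bot [Module.Finite R M] (hI : I ≤ Ideal.jacobson ⊥)
    (hker : LinearMap.ker p = I • ⊤) (h : IsCompl P Q) (hP : P.map p = ⊥) : P = ⊥ := by
  have hfg : P.FG := by
    rw [← Submodule.range_projection h, ← Submodule.map_top]
    exact Module.Finite.fg_top.map _
  refine Submodule.eq_bot_of_le_smul_of_le_jacobson_bot I P hfg (fun x hx => ?_) hI
  rw [← Submodule.projection_apply_of_mem_left h hx]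
  refine projection_mem_smul_of_mem_smul_top h ?_
  rw [← hker]
  exact LinearMap.le_ker_iff_map.mpr hP hx

theorem map_mem_invtSubmodule_of_smul_eq_smul_iff (hp : Function.Surjective p)
    {N : Module.End R V} {a b : R} (hab : ∀ x y : M, b • x = a • y ↔ p y = N (p x))
    (h : IsCompl P Q) : P.map p ∈ N.invtSubmodule := by
  rintro _ ⟨x, hx, rfl⟩
  obtain ⟨y, hy⟩ := hp (N (p x))
  have hxy := congrArg (P.projection Q h) ((hab x y).mpr hy)
  rw [map_smul, map_smul, Submodule.projection_apply_of_mem_left h hx] at hxy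
  exact ⟨_, Submodule.projection_apply_mem h y, (hab _ _).mp hxy⟩

theorem isIndecomposableModule_of_smul_eq_smul_iff [Module.Finite R M] [Nontrivial V]
    (hI : I ≤ Ideal.jacobson ⊥) (hp : Function.Surjective p) (hker : LinearMap.ker p = I • ⊤)
    {N : Module.End R V} {a b : R} (hab : ∀ x y : M, b • x = a • y ↔ p y = N (p x))
    (hN : ∀ P ∈ N.invtSubmodule, ∀ Q ∈ N.invtSubmodule, Disjoint P Q → P = ⊥ ∨ Q = ⊥) :
    IsIndecomposableModule R M := by
  refine ⟨hp.nontrivial, fun P Q h => ?_⟩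
  exact (hN _ (map_mem_invtSubmodule_of_smul_eq_smul_iff hp hab h)
    _ (map_mem_invtSubmodule_of_smul_eq_smul_iff hp hab h.symm)
    (disjoint_map_of_ker_eq_smul_top hker h)).imp
    (eq_bot_of_isCompl_of_map_eq_bot hI hker h)
    (eq_bot_of_isCompl_of_map_eq_bot hI hker h.symm)

theorem length_eq_of_ker_eq_smul_top {M' V' : Type*} [AddCommGroup M'] [Module R M']
    [AddCommGroup V'] [Module R V'] {p' : M' →ₗ[R] V'}
    (hp : Function.Surjective p) (hker : LinearMap.ker p = I • ⊤)
    (hp' : Function.Surjective p') (hker' : LinearMap.ker p' = I • ⊤) (e : M ≃ₗ[R] M') :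
    Module.length R V = Module.length R V' := by
  have hmap : (LinearMap.ker p).map (e : M →ₗ[R] M') = LinearMap.ker p' := by
    rw [hker, hker', Submodule.map_smul'', Submodule.map_top, LinearEquiv.range]
  exact ((p.quotKerEquivOfSurjective hp).symm ≪≫ₗ Submodule.Quotient.equiv _ _ e hmap ≪≫ₗ
    p'.quotKerEquivOfSurjective hp').length_eq

end Head

section Kronecker

variable {R : Type*} [CommRing R] {I : Ideal R} {ι : Type*}

theorem ker_compLeft_mkQ_eq_smul_top [Finite ι] :
    LinearMap.ker ((Submodule.mkQ I).compLeft ι) = I • ⊤ := by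
  classical
  have := Fintype.ofFinite ι
  apply le_antisymm
  · intro v hv
    rw [pi_eq_sum_univ' v]
    refine Submodule.sum_mem _ fun i _ => Submodule.smul_mem_smul ?_ Submodule.mem_top
    exact (Submodule.Quotient.mk_eq_zero I).mp (congrFun hv i)
  · refine Submodule.smul_le.mpr fun r hr v _ => funext fun i => ?_
    exact (Submodule.Quotient.mk_eq_zero I).mpr (I.mul_mem_right _ hr)

/-- The relations `{w ∈ I^ι | α w + N (β w) = 0}`, as a submodule of `R^ι`, imposed on the free
module `R^ι` so that two elements of `I` dual to `α` and `β` act on the quotient as the Kronecker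
pencil `(1, N)`. -/
def kroneckerRelations (α β : I →ₗ[R] R ⧸ I) (N : Module.End R (ι → R ⧸ I)) :
    Submodule R (ι → R) :=
  (LinearMap.ker (α.compLeft ι + N ∘ₗ β.compLeft ι)).map (I.subtype.compLeft ι)

variable (α β : I →ₗ[R] R ⧸ I) (N : Module.End R (ι → R ⧸ I))

theorem kroneckerRelations_le_ker :
    kroneckerRelations α β N ≤ LinearMap.ker ((Submodule.mkQ I).compLeft ι) := by
  rintro _ ⟨w, -, rfl⟩
  exact funext fun i => (Submodule.Quotient.mk_eq_zero I).mpr (w i).2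

/-- The reduction modulo `I` of the module presented by `kroneckerRelations`. -/
def kroneckerHead : ((ι → R) ⧸ kroneckerRelations α β N) →ₗ[R] (ι → R ⧸ I) :=
  (kroneckerRelations α β N).liftQ _ (kroneckerRelations_le_ker α β N)

theorem kroneckerHead_surjective : Function.Surjective (kroneckerHead α β N) := by
  intro v
  obtain ⟨u, rfl⟩ := (Submodule.mkQ_surjective I).comp_left v
  exact ⟨Submodule.Quotient.mk u, rfl⟩

theorem ker_kroneckerHead [Finite ι] : LinearMap.ker (kroneckerHead α β N) = I • ⊤ := by
  rw [kroneckerHead, Submodule.ker_liftQ, ker_compLeft_mkQ_eq_smul_top, Submodule.map_smul'',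
    Submodule.map_top, Submodule.range_mkQ]

variable {α β} {a b : I}

theorem smul_sub_smul_mem_kroneckerRelations_iff (hαa : α a = 1) (hαb : α b = 0) (hβa : β a = 0)
    (hβb : β b = 1) (u v : ι → R) :
    (b : R) • u - (a : R) • v ∈ kroneckerRelations α β N ↔
      (Submodule.mkQ I).compLeft ι v = N ((Submodule.mkQ I).compLeft ι u) := by
  let w : ι → I := fun i => u i • b - v i • a
  have hw : (b : R) • u - (a : R) • v = I.subtype.compLeft ι w := by
    ext i
    simp [w, mul_comm]
  have hα : α.compLeft ι w = -(Submodule.mkQ I).compLeft ι v := by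
    ext i
    simp [w, hαa, hαb, Algebra.smul_def]
  have hβ : β.compLeft ι w = (Submodule.mkQ I).compLeft ι u := by
    ext i
    simp [w, hβa, hβb, Algebra.smul_def]
  have hinj : Function.Injective (I.subtype.compLeft ι) := I.subtype_injective.comp_left
  rw [hw, kroneckerRelations, ← SetLike.mem_coe, Submodule.map_coe, hinj.mem_set_image,
    SetLike.mem_coe, LinearMap.mem_ker, LinearMap.add_apply, LinearMap.comp_apply, hα, hβ,
    neg_add_eq_zero]

theorem smul_eq_smul_iff_kroneckerHead (hαa : α a = 1) (hαb : α b = 0) (hβa : β a = 0)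
    (hβb : β b = 1) (x y : (ι → R) ⧸ kroneckerRelations α β N) :
    (b : R) • x = (a : R) • y ↔ kroneckerHead α β N y = N (kroneckerHead α β N x) := by
  obtain ⟨u, rfl⟩ := Submodule.mkQ_surjective _ x
  obtain ⟨v, rfl⟩ := Submodule.mkQ_surjective _ y
  rw [← map_smul, ← map_smul, ← sub_eq_zero, ← map_sub, Submodule.mkQ_apply,
    Submodule.Quotient.mk_eq_zero]
  exact smul_sub_smul_mem_kroneckerRelations_iff N hαa hαb hβa hβb u v

end Kronecker

theorem not_hasFiniteCMType0_of_infinite {R : Type} [CommRing R] {ι : Type*} [Infinite ι]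
    (M : ι → Type) [∀ i, AddCommGroup (M i)] [∀ i, Module R (M i)] [∀ i, Module.Finite R (M i)]
    (hM : ∀ i, IsIndecomposableModule R (M i)) (hinj : ∀ i j, (M i ≃ₗ[R] M j) → i = j) :
    ¬ HasFiniteCMType0 R := by
  rintro ⟨s, hs, hcover⟩
  choose N hNs hN using fun i => hcover (ModuleCat.of R (M i)) inferInstance (hM i)
  refine Set.infinite_of_injective_forall_mem (fun i j hij => ?_) hNs hs
  obtain ⟨e⟩ := hN i
  obtain ⟨f⟩ := hN j
  rw [← hij] at f
  exact hinj i j (e ≪≫ₗ f.symm)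

theorem exists_dual_pair_of_one_lt_finrank_cotangentSpace {R : Type*} [CommRing R] [IsLocalRing R]
    (h : 1 < Module.finrank (ResidueField R) (CotangentSpace R)) :
    ∃ (a b : maximalIdeal R) (α β : maximalIdeal R →ₗ[R] ResidueField R),
      α a = 1 ∧ α b = 0 ∧ β a = 0 ∧ β b = 1 := by
  have := Module.finite_of_finrank_pos (zero_lt_one.trans h)
  let B := Module.finBasis (ResidueField R) (CotangentSpace R)
  let i₀ : Fin (Module.finrank (ResidueField R) (CotangentSpace R)) := ⟨0, by omega⟩
  let i₁ : Fin (Module.finrank (ResidueField R) (CotangentSpace R)) := ⟨1, h⟩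
  obtain ⟨a, ha⟩ := (maximalIdeal R).toCotangent_surjective (B i₀)
  obtain ⟨b, hb⟩ := (maximalIdeal R).toCotangent_surjective (B i₁)
  refine ⟨a, b, (B.coord i₀).restrictScalars R ∘ₗ (maximalIdeal R).toCotangent,
    (B.coord i₁).restrictScalars R ∘ₗ (maximalIdeal R).toCotangent, ?_⟩
  simp [ha, hb, i₀, i₁]

theorem not_hasFiniteCMType0_of_one_lt_finrank_cotangentSpace {R : Type} [CommRing R]
    [IsLocalRing R] (h : 1 < Module.finrank (ResidueField R) (CotangentSpace R)) :
    ¬ HasFiniteCMType0 R := by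
  obtain ⟨a, b, α, β, hαa, hαb, hβa, hβb⟩ :=
    exists_dual_pair_of_one_lt_finrank_cotangentSpace h
  let k := R ⧸ maximalIdeal R
  have hk : IsSimpleModule R k := isSimpleModule_iff_isCoatom.mpr (maximalIdeal.isMaximal R).out
  have : Nontrivial k := hk.nontrivial
  let N (n : ℕ) : Module.End R (Fin (n + 1) → k) := rightShift R k n
  refine not_hasFiniteCMType0_of_infinite
    (fun n : ℕ => (Fin (n + 1) → R) ⧸ kroneckerRelations α β (N n)) (fun n => ?_)
    (fun m n e => ?_)
  · exact isIndecomposableModule_of_smul_eq_smul_iff (maximalIdeal_le_jacobson _)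
      (kroneckerHead_surjective α β (N n)) (ker_kroneckerHead α β (N n))
      (smul_eq_smul_iff_kroneckerHead (N n) hαa hαb hβa hβb) fun P hP Q hQ =>
      eq_bot_or_eq_bot_of_isNilpotent_of_disjoint (isNilpotent_rightShift R k n)
        (isAtom_ker_rightShift R k n) hP hQ
  · have hlength := length_eq_of_ker_eq_smul_top (kroneckerHead_surjective α β (N m))
      (ker_kroneckerHead α β (N m)) (kroneckerHead_surjective α β (N n))
      (ker_kroneckerHead α β (N n)) e
    simpa [Module.length_pi, Module.length_eq_one R k] using hlength

section Essential

theorem exists_maximal_disjoint {L : Type*} [CompleteLattice L] [IsCompactlyGenerated L] (a : L) :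
    ∃ b, Maximal (Disjoint a) b := by
  obtain ⟨b, -, hb⟩ := zorn_le_nonempty₀ {b | Disjoint a b} (fun c hc hchain _ _ =>
    ⟨sSup c, hchain.directedOn.disjoint_sSup_right.mpr fun b hb => hc hb, fun _ => le_sSup⟩)
    ⊥ disjoint_bot_right
  exact ⟨b, hb⟩

variable {R M : Type*} [Ring R] [AddCommGroup M] [Module R M] {N Q : Submodule R M}

theorem eq_bot_of_disjoint_map_mkQ (hQ : Maximal (Disjoint N) Q) {P : Submodule R (M ⧸ Q)}
    (hP : Disjoint (N.map Q.mkQ) P) : P = ⊥ := by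
  have hdisj : Disjoint N (P.comap Q.mkQ) := by
    refine Submodule.disjoint_def.mpr fun x hxN hxP => ?_
    have hx : Q.mkQ x = 0 :=
      Submodule.disjoint_def.mp hP _ (Submodule.mem_map_of_mem hxN) hxP
    exact Submodule.disjoint_def.mp hQ.prop x hxN ((Submodule.Quotient.mk_eq_zero Q).mp hx)
  have hle : P.comap Q.mkQ ≤ Q := hQ.le_of_ge hdisj (Submodule.le_comap_mkQ Q P)
  rw [← Submodule.map_comap_eq_of_surjective Q.mkQ_surjective P, ← LinearMap.le_ker_iff_map,
    Submodule.ker_mkQ]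
  exact hle

end Essential

section Principal

theorem exists_pow_smul_ne_zero_of_pow_smul_eq_zero {S X : Type*} [Monoid S] [Zero X]
    [MulAction S X] [Nontrivial X] {t : S} {e : ℕ} (he : ∀ y : X, t ^ e • y = 0) :
    ∃ c < e, (∀ y : X, t ^ (c + 1) • y = 0) ∧ ∃ x : X, t ^ c • x ≠ 0 := by
  classical
  have hex : ∃ d, ∀ y : X, t ^ d • y = 0 := ⟨e, he⟩
  obtain ⟨c, hc⟩ : ∃ c, Nat.find hex = c + 1 := by
    refine Nat.exists_eq_succ_of_ne_zero fun h => ?_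
    obtain ⟨y, hy⟩ := exists_ne (0 : X)
    exact hy (by simpa only [h, pow_zero, one_smul] using Nat.find_spec hex y)
  exact ⟨c, hc.symm.trans_le (Nat.find_min' hex he), hc ▸ Nat.find_spec hex,
    not_forall.mp (Nat.find_min hex (hc ▸ c.lt_succ_self))⟩

variable {R : Type*} [CommRing R] [IsLocalRing R] {t : R}
  {M : Type*} [AddCommGroup M] [Module R M]

theorem isUnit_or_dvd_of_maximalIdeal_eq_span (ht : maximalIdeal R = Ideal.span {t}) (r : R) :
    IsUnit r ∨ t ∣ r := by
  rw [← Ideal.mem_span_singleton, ← ht, mem_maximalIdeal]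
  exact em _

theorem dvd_pow_or_pow_succ_dvd (ht : maximalIdeal R = Ideal.span {t}) (c : ℕ) (r : R) :
    r ∣ t ^ c ∨ t ^ (c + 1) ∣ r := by
  induction c generalizing r with
  | zero => simpa [isUnit_iff_dvd_one] using isUnit_or_dvd_of_maximalIdeal_eq_span ht r
  | succ c ih =>
    rcases isUnit_or_dvd_of_maximalIdeal_eq_span ht r with hr | ⟨s, rfl⟩
    · exact .inl hr.dvd
    · rw [pow_succ' t c, pow_succ' t (c + 1)]
      exact (ih s).imp (mul_dvd_mul_left t) (mul_dvd_mul_left t)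

theorem torsionOf_eq_span_pow_succ (ht : maximalIdeal R = Ideal.span {t}) {c : ℕ} {x : M}
    (hx : t ^ c • x ≠ 0) (hx' : t ^ (c + 1) • x = 0) :
    Ideal.torsionOf R M x = Ideal.span {t ^ (c + 1)} := by
  ext r
  rw [Ideal.mem_torsionOf_iff, Ideal.mem_span_singleton]
  constructor
  · intro hr
    refine (dvd_pow_or_pow_succ_dvd ht c r).resolve_left ?_
    rintro ⟨s, hs⟩
    exact hx (by rw [hs, mul_comm, mul_smul, hr, smul_zero])
  · rintro ⟨s, rfl⟩
    rw [mul_comm, mul_smul, hx', smul_zero]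

theorem mem_of_smul_eq_zero_of_essential (ht : maximalIdeal R = Ideal.span {t})
    {N : Submodule R M} (hess : ∀ P, Disjoint N P → P = ⊥) {y : M} (hy : t • y = 0) : y ∈ N := by
  by_contra hyN
  have hdisj : Disjoint N (Submodule.span R {y}) := by
    refine Submodule.disjoint_def.mpr fun z hzN hz => ?_
    obtain ⟨r, rfl⟩ := Submodule.mem_span_singleton.mp hz
    rcases isUnit_or_dvd_of_maximalIdeal_eq_span ht r with hr | ⟨s, rfl⟩
    · exact absurd ((Submodule.smul_mem_iff_of_isUnit N hr).mp hzN) hyN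
    · rw [mul_comm, mul_smul, hy, smul_zero]
  exact hyN (Submodule.span_singleton_eq_bot.mp (hess _ hdisj) ▸ N.zero_mem)

theorem span_singleton_eq_top_of_essential (ht : maximalIdeal R = Ideal.span {t}) {c : ℕ}
    (hM : ∀ y : M, t ^ (c + 1) • y = 0) {x : M} (hx : t ^ c • x ≠ 0)
    (hess : ∀ P, Disjoint (Submodule.span R {x}) P → P = ⊥) : Submodule.span R {x} = ⊤ := by
  have hstep : ∀ y, t • y ∈ Submodule.span R {x} → y ∈ Submodule.span R {x} := by
    intro y hy
    obtain ⟨r, hr⟩ := Submodule.mem_span_singleton.mp hy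
    have hr_not : ¬ IsUnit r := by
      intro hu
      have h0 : r • t ^ c • x = 0 := by rw [smul_comm, hr, smul_smul, ← pow_succ, hM]
      exact hx (hu.smul_eq_zero.mp h0)
    obtain ⟨s, rfl⟩ := (isUnit_or_dvd_of_maximalIdeal_eq_span ht r).resolve_left hr_not
    have hys : t • (y - s • x) = 0 := by rw [smul_sub, smul_smul, hr, sub_self]
    exact (Submodule.sub_mem_iff_left _ (Submodule.smul_mem _ s
      (Submodule.mem_span_singleton_self x))).mp (mem_of_smul_eq_zero_of_essential ht hess hys)
  have hpow : ∀ j y, t ^ j • y ∈ Submodule.span R {x} → y ∈ Submodule.span R {x} := by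
    intro j
    induction j with
    | zero => simp
    | succ j ih =>
      intro y hy
      rw [pow_succ, mul_smul] at hy
      exact hstep y (ih _ hy)
  exact eq_top_iff.mpr fun y _ => hpow (c + 1) y (hM y ▸ Submodule.zero_mem _)

theorem exists_isCompl_span_singleton (ht : maximalIdeal R = Ideal.span {t}) {c : ℕ}
    (hM : ∀ y : M, t ^ (c + 1) • y = 0) {x : M} (hx : t ^ c • x ≠ 0) :
    ∃ Q : Submodule R M, IsCompl (Submodule.span R {x}) Q := by
  obtain ⟨Q, hQ⟩ := exists_maximal_disjoint (Submodule.span R {x})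
  have hmap : (Submodule.span R {x}).map Q.mkQ = Submodule.span R {Q.mkQ x} := by
    rw [Submodule.map_span, Set.image_singleton]
  have hMQ : ∀ y : M ⧸ Q, t ^ (c + 1) • y = 0 := by
    intro y
    obtain ⟨y, rfl⟩ := Q.mkQ_surjective y
    rw [← map_smul, hM, map_zero]
  have hxQ : t ^ c • Q.mkQ x ≠ 0 := by
    intro h
    rw [← map_smul] at h
    exact hx (Submodule.disjoint_def.mp hQ.prop _
      (Submodule.smul_mem _ _ (Submodule.mem_span_singleton_self x))
      ((Submodule.Quotient.mk_eq_zero Q).mp h))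
  have htop := span_singleton_eq_top_of_essential ht hMQ hxQ fun P hP =>
    eq_bot_of_disjoint_map_mkQ hQ (hmap ▸ hP)
  rw [← hmap, Submodule.map_mkQ_eq_top] at htop
  exact ⟨Q, hQ.prop, codisjoint_iff.mpr (by rwa [sup_comm])⟩

theorem IsIndecomposableModule.exists_linearEquiv_quotient_span_pow
    (hM : IsIndecomposableModule R M) (ht : maximalIdeal R = Ideal.span {t}) {e : ℕ}
    (he : ∀ y : M, t ^ e • y = 0) : ∃ c ≤ e, Nonempty (M ≃ₗ[R] R ⧸ Ideal.span {t ^ c}) := by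
  have := hM.1
  obtain ⟨c, hce, hc, x, hx⟩ := exists_pow_smul_ne_zero_of_pow_smul_eq_zero he
  obtain ⟨Q, hQ⟩ := exists_isCompl_span_singleton ht hc hx
  have hx_span : Submodule.span R {x} ≠ ⊥ := by
    rw [Ne, Submodule.span_singleton_eq_bot]
    rintro rfl
    exact hx (smul_zero _)
  have htop : Submodule.span R {x} = ⊤ :=
    eq_top_of_isCompl_bot ((hM.2 _ _ hQ).resolve_left hx_span ▸ hQ)
  exact ⟨c + 1, hce, ⟨(Submodule.quotEquivOfEq _ _ (torsionOf_eq_span_pow_succ ht hx (hc x)).symm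
    ≪≫ₗ Ideal.quotTorsionOfEquivSpanSingleton R M x ≪≫ₗ LinearEquiv.ofTop _ htop).symm⟩⟩

theorem hasFiniteCMType0_of_maximalIdeal_eq_span {R : Type} [CommRing R] [IsLocalRing R] {t : R}
    (ht : maximalIdeal R = Ideal.span {t}) (hnil : IsNilpotent t) : HasFiniteCMType0 R := by
  obtain ⟨e, he⟩ := hnil
  refine ⟨(fun c => ModuleCat.of R (R ⧸ Ideal.span {t ^ c})) '' Set.Iic e,
    (Set.finite_Iic e).image _, fun N _ hN => ?_⟩
  obtain ⟨c, hc, hiso⟩ := hN.exists_linearEquiv_quotient_span_pow ht fun y => by rw [he, zero_smul]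
  exact ⟨_, ⟨c, hc, rfl⟩, hiso⟩

end Principal

theorem stmt17_general (R : Type) [CommRing R] [IsLocalRing R] [IsArtinianRing R] :
    HasFiniteCMType0 R ↔
      Module.finrank (R ⧸ maximalIdeal R) (maximalIdeal R).Cotangent ≤ 1 := by
  refine ⟨fun hfin => not_lt.mp fun hlt =>
    not_hasFiniteCMType0_of_one_lt_finrank_cotangentSpace hlt hfin, fun hrank => ?_⟩
  obtain ⟨t, ht⟩ := finrank_cotangentSpace_le_one_iff.mp hrank
  have ht_mem : t ∈ maximalIdeal R := ht ▸ Ideal.mem_span_singleton_self t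
  obtain ⟨e, he⟩ := (isArtinianRing_iff_isNilpotent_maximalIdeal R).mp inferInstance
  have hte := Ideal.pow_mem_pow ht_mem e
  rw [he] at hte
  exact hasFiniteCMType0_of_maximalIdeal_eq_span ht ⟨e, hte⟩

/-- Let `(R, m)` be a zero-dimensional equicharacteristic complete local
(Noetherian) ring.  Then `R` has finite Cohen-Macaulay type if and only if `R` is a
hypersurface, i.e. `dim_k(m/m²) ≤ 1` (equivalently `R ≅ k⟦x⟧/(x^m)`). -/
theorem stmt17 (R : Type) [CommRing R] [IsLocalRing R] [IsNoetherianRing R]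
    (hdim : ringKrullDim R = 0)
    (hcomp : IsAdicComplete (maximalIdeal R) R)
    (hequi : ∃ p : ℕ, CharP R p ∧ CharP (R ⧸ maximalIdeal R) p) :
    HasFiniteCMType0 R ↔
      Module.finrank (R ⧸ maximalIdeal R) (maximalIdeal R).Cotangent ≤ 1 := by
  have := isArtinianRing_iff_krullDimLE_zero.mpr (Ring.krullDimLE_iff.mpr hdim.le)
  exact stmt17_general R
end
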